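/- arXiv:1605.04193 — 2 statements merged into one kernel-verified Lean document; each statement's English description precedes it below -/
import Mathlib

section
/- Let Ω ⊂ ℝ² be a nonempty bounded open simply connected set with smooth boundary, B smooth on a neighborhood of the closure of Ω with B(x) > 0 there, ψ smooth on a neighborhood of the closure of Ω with Δψ = B in Ω and ψ = 0 on ∂Ω, and A = (−∂₂ψ, ∂₁ψ) the canonical vector potential. Set ψ_min := inf_Ω ψ and Φ := (1/(2π))∫_Ω B(x) dx. Assume the set {x ∈ Ω : ψ(x) = ψ_min} consists of finitely many points x₁, …, x_N, at each of which the Hessian matrix Hess ψ(x_j) is positive definite. Then limsup_{h→0⁺} exp(−2ψ_min/h) · λ_{P₋}(h) ≤ 4Φ · ( Σ_{j=1}^N (det Hess ψ(x_j))^{−1/2} )^{−1}. -/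
/-!
Since `B = ∂₁A₂ - ∂₂A₁`, integration by parts turns the Pauli form into `∫ |D u|²`, where `D` is the
magnetic Cauchy–Riemann operator. Hence the form is nonnegative, and for the canonical potential
`D e^{-ψ/h} = 0`. The zero mode `e^{-ψ/h}` does not vanish on the boundary, so it is multiplied by
`k_h(ψ)`, where `k_h` is a smooth truncation of `1 - e^{2s/h}`. Green's formula bounds the energy of
this trial state by `2h ∫_Ω B = 4πhΦ`. As `ψ < 0` at its minima by the maximum principle, `k_h(ψ)`
tends to `1` there, and Laplace's method (Fatou's lemma after rescaling by `√h` around each minimum)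
gives asymptotically at least `πh e^{-2ψ_min/h} ∑ⱼ (det Hess ψ(xⱼ))^{-1/2}` for its squared norm.
-/

open MeasureTheory Filter Topology

noncomputable section

abbrev E2 : Type := EuclideanSpace ℝ (Fin 2)

/-- Partial derivative of a complex-valued function in the `i`-th coordinate direction. -/
def pdC (i : Fin 2) (f : E2 → ℂ) (x : E2) : ℂ :=
  fderiv ℝ f x (EuclideanSpace.single i 1)

/-- Partial derivative of a real-valued function in the `i`-th coordinate direction. -/
def pdR (i : Fin 2) (f : E2 → ℝ) (x : E2) : ℝ :=
  fderiv ℝ f x (EuclideanSpace.single i 1)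

/-- The Laplacian `Δf = ∂₁²f + ∂₂²f`. -/
def lapl (f : E2 → ℝ) (x : E2) : ℝ :=
  pdR 0 (pdR 0 f) x + pdR 1 (pdR 1 f) x

/-- The Pauli quadratic form
`Q_h(u) = ∫_Ω (|h∂₁u − iA₁u|² + |h∂₂u − iA₂u|²) dx − h∫_Ω B|u|² dx`. -/
def pauliQ (Ω : Set E2) (A₁ A₂ B : E2 → ℝ) (h : ℝ) (u : E2 → ℂ) : ℝ :=
  (∫ x in Ω, (‖(h : ℂ) * pdC 0 u x - Complex.I * (A₁ x : ℂ) * u x‖ ^ 2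
      + ‖(h : ℂ) * pdC 1 u x - Complex.I * (A₂ x : ℂ) * u x‖ ^ 2))
    - h * ∫ x in Ω, B x * ‖u x‖ ^ 2

/-- `u ∈ C_c^∞(Ω; ℂ)`. -/
def IsCptSmoothIn (Ω : Set E2) (u : E2 → ℂ) : Prop :=
  ContDiff ℝ (⊤ : ℕ∞) u ∧ HasCompactSupport u ∧ tsupport u ⊆ Ω

/-- The lowest Dirichlet Pauli eigenvalue
`λ_{P₋}(h) = inf { Q_h(u)/∫_Ω|u|² : 0 ≠ u ∈ C_c^∞(Ω;ℂ) }`. -/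
def lambdaP (Ω : Set E2) (A₁ A₂ B : E2 → ℝ) (h : ℝ) : ℝ :=
  sInf { r | ∃ u : E2 → ℂ, IsCptSmoothIn Ω u ∧ u ≠ 0 ∧
    r = pauliQ Ω A₁ A₂ B h u / ∫ x in Ω, ‖u x‖ ^ 2 }

/-- The Hessian matrix of second partial derivatives of `ψ` at `x`. -/
def hess (ψ : E2 → ℝ) (x : E2) : Matrix (Fin 2) (Fin 2) ℝ :=
  Matrix.of fun i j => pdR i (pdR j ψ) x

/-- `Ω` has smooth boundary: near each boundary point, `Ω` is the sublevel set of a smooth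
function with nonvanishing differential. -/
def HasSmoothBoundary (Ω : Set E2) : Prop :=
  ∀ x ∈ frontier Ω, ∃ (V : Set E2) (f : E2 → ℝ), IsOpen V ∧ x ∈ V ∧
    ContDiffOn ℝ (⊤ : ℕ∞) f V ∧ (∀ y ∈ V, fderiv ℝ f y ≠ 0) ∧
    Ω ∩ V = {y ∈ V | f y < 0}

open scoped ContDiff Matrix

section Gaussian

open scoped MatrixOrder

variable {ι : Type*} [Fintype ι] {M : Matrix ι ι ℝ}

lemma integral_comp_linearMap {E F : Type*} [NormedAddCommGroup E] [NormedSpace ℝ E]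
    [MeasurableSpace E] [BorelSpace E] [FiniteDimensional ℝ E] [NormedAddCommGroup F]
    [NormedSpace ℝ F] (μ : Measure E) [μ.IsAddHaarMeasure] (f : E → F) {L : E →ₗ[ℝ] E}
    (hL : LinearMap.det L ≠ 0) :
    ∫ x, f (L x) ∂μ = |(LinearMap.det L)⁻¹| • ∫ x, f x ∂μ := by
  have hemb : MeasurableEmbedding L :=
    (LinearMap.equivOfDetNeZero L hL).toContinuousLinearEquiv.toHomeomorph.measurableEmbedding
  rw [← hemb.integral_map, Measure.map_linearMap_addHaar_eq_smul_addHaar μ hL,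
    integral_smul_measure, ENNReal.toReal_ofReal (abs_nonneg _)]

lemma integral_exp_neg_quadraticForm [DecidableEq ι] (hM : M.PosDef) :
    ∫ y : EuclideanSpace ℝ ι, Real.exp (-(y ⬝ᵥ M *ᵥ y)) =
      Real.pi ^ ((Fintype.card ι : ℝ) / 2) * M.det ^ (-(1 : ℝ) / 2) := by
  obtain ⟨S, rfl⟩ : ∃ S, M = star S * S :=
    CStarAlgebra.nonneg_iff_eq_star_mul_self.mp hM.posSemidef.nonneg
  have hdet : (star S * S).det = S.det ^ 2 := by
    rw [Matrix.det_mul, Matrix.star_eq_conjTranspose, Matrix.det_conjTranspose, star_trivial, sq]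
  have hS : S.det ≠ 0 := fun h => hM.det_pos.ne' (by rw [hdet, h, zero_pow two_ne_zero])
  have hLdet : LinearMap.det (Matrix.toEuclideanLin S) = S.det := by
    rw [Matrix.toEuclideanLin, Matrix.toLpLin_eq_toLin, LinearMap.det_toLin]
  have hform (y : EuclideanSpace ℝ ι) :
      -(y ⬝ᵥ (star S * S) *ᵥ y) = -1 * ‖Matrix.toEuclideanLin S y‖ ^ 2 := by
    rw [← Matrix.mulVec_mulVec, Matrix.star_eq_conjTranspose,
      Matrix.conjTranspose_eq_transpose_of_trivial, Matrix.dotProduct_mulVec,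
      Matrix.vecMul_transpose, EuclideanSpace.real_norm_sq_eq, neg_one_mul]
    simp only [Matrix.toLpLin_apply, dotProduct, sq]
  simp only [hform]
  rw [integral_comp_linearMap volume (fun z => Real.exp (-1 * ‖z‖ ^ 2)) (hLdet.trans_ne hS),
    GaussianFourier.integral_rexp_neg_mul_sq_norm one_pos, hLdet, hdet, div_one,
    finrank_euclideanSpace, neg_div, Real.rpow_neg (sq_nonneg _), ← Real.sqrt_eq_rpow,
    Real.sqrt_sq_eq_abs, abs_inv, smul_eq_mul, mul_comm]

lemma integrable_exp_neg_quadraticForm (hM : M.PosDef) :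
    Integrable fun y : EuclideanSpace ℝ ι => Real.exp (-(y ⬝ᵥ M *ᵥ y)) := by
  classical
  refine Integrable.of_integral_ne_zero ?_
  rw [integral_exp_neg_quadraticForm hM]
  exact (mul_pos (Real.rpow_pos_of_pos Real.pi_pos _) (Real.rpow_pos_of_pos hM.det_pos _)).ne'

end Gaussian

section Concentration

lemma tendsto_add_smul {E ι : Type*} [NormedAddCommGroup E] [NormedSpace ℝ E] {l : Filter ι}
    {r : ι → ℝ} (hr : Tendsto r l (𝓝 0)) (a y : E) :
    Tendsto (fun i => a + r i • y) l (𝓝 a) := by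
  simpa using (hr.smul_const y).const_add a

lemma eventually_lt_integral_of_tendsto {α ι : Type*} [MeasurableSpace α] {μ : Measure α}
    {l : Filter ι} [l.IsCountablyGenerated] {F : ι → α → ℝ} {f : α → ℝ} {c : ℝ}
    (hF : ∀ᶠ i in l, Integrable (F i) μ) (hF0 : ∀ i, 0 ≤ F i)
    (hlim : ∀ x, Tendsto (F · x) l (𝓝 (f x))) (hf : Integrable f μ) (hc : c < ∫ x, f x ∂μ) :
    ∀ᶠ i in l, c < ∫ x, F i x ∂μ := by
  classical
  obtain rfl | _ := l.eq_or_neBot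
  · exact eventually_bot
  obtain hc0 | hc0 := lt_or_ge c 0
  · exact .of_forall fun i => hc0.trans_le (integral_nonneg (hF0 i))
  have hf0 : 0 ≤ f := fun x => ge_of_tendsto' (hlim x) fun i => hF0 i x
  let G (i : ι) (x : α) : ENNReal := if Integrable (F i) μ then .ofReal (F i x) else 0
  have hG (i : ι) : AEMeasurable (G i) μ := by
    by_cases h : Integrable (F i) μ
    · simpa only [G, if_pos h] using h.aestronglyMeasurable.aemeasurable.ennreal_ofReal
    · simpa only [G, if_neg h] using aemeasurable_const
  have hGlim (x : α) : Tendsto (G · x) l (𝓝 (.ofReal (f x))) :=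
    (ENNReal.tendsto_ofReal (hlim x)).congr' (hF.mono fun i hi => (if_pos hi).symm)
  have hlt : ENNReal.ofReal c < ∫⁻ x, liminf (G · x) l ∂μ := by
    simp only [fun x => (hGlim x).liminf_eq]
    rw [← ofReal_integral_eq_lintegral_ofReal hf (ae_of_all _ hf0)]
    exact (ENNReal.ofReal_lt_ofReal_iff_of_nonneg hc0).mpr hc
  filter_upwards [eventually_lt_of_lt_liminf (hlt.trans_le (lintegral_liminf_le' hG)), hF]
    with i hi hFi
  simp only [G, if_pos hFi] at hi
  rw [← ofReal_integral_eq_lintegral_ofReal hFi (ae_of_all _ (hF0 i))] at hi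
  exact (ENNReal.ofReal_lt_ofReal_iff_of_nonneg hc0).mp hi

variable {E : Type*} [NormedAddCommGroup E] [NormedSpace ℝ E] [FiniteDimensional ℝ E]
  [MeasurableSpace E] [BorelSpace E] (μ : Measure E) [μ.IsAddHaarMeasure]

lemma integral_comp_add_smul (f : E → ℝ) (a : E) (r : ℝ) :
    ∫ y, f (a + r • y) ∂μ = |(r ^ Module.finrank ℝ E)⁻¹| * ∫ x, f x ∂μ := by
  rw [Measure.integral_comp_smul μ fun y => f (a + y), integral_add_left_eq_self, smul_eq_mul]

lemma eventually_lt_integral_of_concentration {ι κ : Type*} [Fintype κ] {l : Filter ι}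
    [l.IsCountablyGenerated] {F : ι → E → ℝ} (hF : ∀ i, Integrable (F i) μ) (hF0 : ∀ i, 0 ≤ F i)
    {r : ι → ℝ} (hr : Tendsto r l (𝓝[>] 0)) {a : κ → E} (ha : a.Injective) {G : κ → E → ℝ}
    (hlim : ∀ j y, Tendsto (fun i => F i (a j + r i • y)) l (𝓝 (G j y)))
    (hG : ∀ j, Integrable (G j) μ) {c : ℝ} (hc : c < ∑ j, ∫ y, G j y ∂μ) :
    ∀ᶠ i in l, c * r i ^ Module.finrank ℝ E < ∫ x, F i x ∂μ := by
  obtain ⟨V, hV, hVdisj⟩ := (Set.finite_range a).t2_separation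
  have hr0 : ∀ᶠ i in l, 0 < r i := hr.eventually self_mem_nhdsWithin
  let Fj (i : ι) (j : κ) : E → ℝ := (V (a j)).indicator (F i)
  have hFj (i : ι) (j : κ) : Integrable (Fj i j) μ := (hF i).indicator (hV _).2.measurableSet
  have hFj0 (i : ι) (j : κ) : 0 ≤ Fj i j := fun x => Set.indicator_nonneg (fun x _ => hF0 i x) x
  have hmass (i : ι) : ∑ j, ∫ x, Fj i j x ∂μ ≤ ∫ x, F i x ∂μ := by
    simp only [Fj, integral_indicator (hV _).2.measurableSet]
    rw [← integral_iUnion_fintype (fun j => (hV _).2.measurableSet)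
      (fun i j hij => hVdisj ⟨i, rfl⟩ ⟨j, rfl⟩ (ha.ne hij)) fun j => (hF i).integrableOn]
    exact setIntegral_le_integral (hF i) (ae_of_all _ (hF0 i))
  have hblow : ∀ᶠ i in l, c < ∫ y, ∑ j, Fj i j (a j + r i • y) ∂μ := by
    refine eventually_lt_integral_of_tendsto (f := fun y => ∑ j, G j y) ?_ ?_ (fun y => ?_)
      (integrable_finsetSum _ fun j _ => hG j) (by rwa [integral_finsetSum _ fun j _ => hG j])
    · filter_upwards [hr0] with i hi
      exact integrable_finsetSum _ fun j _ =>
        ((hFj i j).comp_add_left (a j)).comp_smul hi.ne'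
    · exact fun i y => Finset.sum_nonneg fun j _ => hFj0 i j _
    · refine tendsto_finsetSum _ fun j _ => (hlim j y).congr' ?_
      have hmem := tendsto_add_smul (hr.mono_right nhdsWithin_le_nhds) (a j) y
      filter_upwards [hmem.eventually ((hV (a j)).2.mem_nhds (hV (a j)).1)] with i hi
      exact (Set.indicator_of_mem hi _).symm
  filter_upwards [hblow, hr0] with i hi hri
  have hpow : 0 < r i ^ Module.finrank ℝ E := pow_pos hri _
  rw [integral_finsetSum _ fun j _ => ((hFj i j).comp_add_left (a j)).comp_smul hri.ne'] at hi
  simp only [integral_comp_add_smul, ← Finset.mul_sum, abs_of_pos (inv_pos.mpr hpow)] at hi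
  exact ((lt_inv_mul_iff₀' hpow).mp hi).trans_le (hmass i)

lemma tendsto_sqrt_nhdsGT_zero : Tendsto Real.sqrt (𝓝[>] 0) (𝓝[>] 0) :=
  tendsto_nhdsWithin_iff.mpr ⟨(Real.continuous_sqrt.tendsto' 0 0 Real.sqrt_zero).mono_left
    nhdsWithin_le_nhds, eventually_mem_nhdsWithin.mono fun _ => Real.sqrt_pos.mpr⟩

end Concentration

section Taylor

lemma tendsto_div_sq_of_hasDerivAt {φ φ' : ℝ → ℝ} {c : ℝ}
    (hφ : ∀ᶠ t in 𝓝 0, HasDerivAt φ (φ' t) t) (hφ0 : φ' 0 = 0) (hφ' : HasDerivAt φ' c 0) :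
    Tendsto (fun t => (φ t - φ 0) / t ^ 2) (𝓝[>] 0) (𝓝 (c / 2)) := by
  have hslope : Tendsto (fun t => φ' t / (2 * t)) (𝓝[>] 0) (𝓝 (c / 2)) := by
    refine ((hasDerivAt_iff_tendsto_slope.mp hφ').mono_left
      (nhdsGT_le_nhdsNE 0) |>.div_const 2).congr fun t => ?_
    rw [slope_def_field, hφ0, sub_zero, sub_zero, div_div, mul_comm]
  refine HasDerivAt.lhopital_zero_nhdsGT (g' := fun t => 2 * t)
    ((hφ.filter_mono nhdsWithin_le_nhds).mono fun t ht => ht.sub_const _)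
    (.of_forall fun t => by simpa using hasDerivAt_pow 2 t)
    (eventually_mem_nhdsWithin.mono fun t ht => (mul_pos two_pos ht).ne') ?_ ?_ hslope
  · simpa using (hφ.self_of_nhds.continuousAt.tendsto.mono_left
      nhdsWithin_le_nhds).sub_const (φ 0)
  · simpa using ((continuous_pow 2).tendsto (0 : ℝ)).mono_left nhdsWithin_le_nhds

variable {E : Type*} [NormedAddCommGroup E] [NormedSpace ℝ E] {f : E → ℝ} {x : E}

lemma tendsto_sub_div_sq_of_fderiv_eq_zero (hf : ContDiffAt ℝ 2 f x) (hx : fderiv ℝ f x = 0)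
    (y : E) :
    Tendsto (fun t : ℝ => (f (x + t • y) - f x) / t ^ 2) (𝓝[>] 0)
      (𝓝 (fderiv ℝ (fderiv ℝ f) x y y / 2)) := by
  have hline (t : ℝ) : HasDerivAt (fun s : ℝ => x + s • y) y t := by
    simpa using ((hasDerivAt_id t).smul_const y).const_add x
  have hdiff : ∀ᶠ z in 𝓝 x, DifferentiableAt ℝ f z :=
    (hf.eventually (by simp)).mono fun z hz => hz.differentiableAt two_ne_zero
  have hdiff2 : DifferentiableAt ℝ (fderiv ℝ f) (x + (0 : ℝ) • y) := by
    simpa using (hf.fderiv_right (m := 1) (by norm_num)).differentiableAt one_ne_zero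
  refine (tendsto_div_sq_of_hasDerivAt (φ := fun t => f (x + t • y))
    (φ' := fun t => fderiv ℝ f (x + t • y) y) ?_ (by simp [hx]) ?_).congr fun t => by simp
  · filter_upwards [(tendsto_add_smul tendsto_id x y).eventually hdiff] with t ht
    exact ht.hasFDerivAt.comp_hasDerivAt t (hline t)
  · have h := hdiff2.hasFDerivAt.comp_hasDerivAt (0 : ℝ) (hline 0)
    rw [zero_smul, add_zero] at h
    exact (ContinuousLinearMap.apply ℝ ℝ y).hasFDerivAt.comp_hasDerivAt 0 h

end Taylor

section Ramp

/-- A smooth, nonnegative approximation from below of the positive part `max t 0`, vanishing on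
`(-∞, 0]` together with all its derivatives: composing with it truncates a function smoothly. -/
def smoothRamp (t : ℝ) : ℝ := ∫ s in (0 : ℝ)..t, Real.smoothTransition s

lemma hasDerivAt_smoothRamp (t : ℝ) : HasDerivAt smoothRamp (Real.smoothTransition t) t :=
  Real.smoothTransition.continuous.integral_hasStrictDerivAt 0 t |>.hasDerivAt

lemma contDiff_smoothRamp : ContDiff ℝ ∞ smoothRamp :=
  contDiff_infty_iff_deriv.mpr ⟨fun t => (hasDerivAt_smoothRamp t).differentiableAt, by
    simpa only [funext fun t => (hasDerivAt_smoothRamp t).deriv] using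
      Real.smoothTransition.contDiff⟩

lemma smoothRamp_of_nonpos {t : ℝ} (ht : t ≤ 0) : smoothRamp t = 0 := by
  rw [smoothRamp, intervalIntegral.integral_congr (g := fun _ => 0),
    intervalIntegral.integral_zero]
  intro s hs
  rw [Set.uIcc_of_ge ht] at hs
  exact Real.smoothTransition.zero_of_nonpos hs.2

lemma monotone_smoothRamp : Monotone smoothRamp :=
  monotone_of_hasDerivAt_nonneg hasDerivAt_smoothRamp fun t => Real.smoothTransition.nonneg t

lemma smoothRamp_nonneg (t : ℝ) : 0 ≤ smoothRamp t := by
  obtain ht | ht := le_total t 0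
  · exact (smoothRamp_of_nonpos ht).ge
  · exact (smoothRamp_of_nonpos le_rfl).symm.trans_le (monotone_smoothRamp ht)

lemma smoothRamp_le {t : ℝ} (ht : 0 ≤ t) : smoothRamp t ≤ t := by
  have hanti : Antitone fun s => smoothRamp s - s :=
    antitone_of_hasDerivAt_nonpos (fun s => (hasDerivAt_smoothRamp s).sub (hasDerivAt_id s))
      fun s => sub_nonpos.mpr (Real.smoothTransition.le_one s)
  simpa [smoothRamp_of_nonpos le_rfl] using hanti ht

lemma sub_one_le_smoothRamp (t : ℝ) : t - 1 ≤ smoothRamp t := by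
  obtain ht | ht := le_total t 1
  · exact (sub_nonpos.mpr ht).trans (smoothRamp_nonneg t)
  · have hsub : smoothRamp t - smoothRamp 1 = ∫ s in (1 : ℝ)..t, Real.smoothTransition s :=
      intervalIntegral.integral_interval_sub_left
        (Real.smoothTransition.continuous.intervalIntegrable _ _)
        (Real.smoothTransition.continuous.intervalIntegrable _ _)
    rw [intervalIntegral.integral_congr (g := fun _ => 1), intervalIntegral.integral_const,
      smul_eq_mul, mul_one] at hsub
    · linarith [smoothRamp_nonneg 1]
    · rw [Set.uIcc_of_le ht]
      exact fun s hs => Real.smoothTransition.one_of_one_le hs.1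

end Ramp

section CompactSupport

/-- `f` vanishes on `Ω` outside a compact subset of `Ω`. Unlike `HasCompactSupport`, this does not
constrain the values of `f` outside `Ω`. -/
def HasCompactSupportIn {X F : Type*} [TopologicalSpace X] [Zero F] (Ω : Set X) (f : X → F) :
    Prop :=
  ∃ K ⊆ Ω, IsCompact K ∧ ∀ x ∈ Ω, x ∉ K → f x = 0

namespace HasCompactSupportIn

section Topology

variable {X F G : Type*} [TopologicalSpace X] [Zero F] [Zero G] {Ω : Set X} {f : X → F}

lemma of_tsupport_subset (hf : HasCompactSupport f) (hfΩ : tsupport f ⊆ Ω) :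
    HasCompactSupportIn Ω f :=
  ⟨tsupport f, hfΩ, hf, fun _ _ => image_eq_zero_of_notMem_tsupport⟩

lemma mono {g : X → G} (hf : HasCompactSupportIn Ω f) (hg : ∀ x ∈ Ω, f x = 0 → g x = 0) :
    HasCompactSupportIn Ω g := by
  obtain ⟨K, hKΩ, hK, hf0⟩ := hf
  exact ⟨K, hKΩ, hK, fun x hx hxK => hg x hx (hf0 x hx hxK)⟩

lemma exists_tsupport_indicator_subset [T2Space X] (hf : HasCompactSupportIn Ω f) :
    ∃ K ⊆ Ω, IsCompact K ∧ tsupport (Ω.indicator f) ⊆ K := by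
  obtain ⟨K, hKΩ, hK, hf0⟩ := hf
  refine ⟨K, hKΩ, hK, closure_minimal (fun x hx => ?_) hK.isClosed⟩
  by_contra hxK
  have hxΩ : x ∈ Ω := Set.mem_of_indicator_ne_zero hx
  exact hx (by rw [Set.indicator_of_mem hxΩ, hf0 x hxΩ hxK])

lemma hasCompactSupport_indicator [T2Space X] (hf : HasCompactSupportIn Ω f) :
    HasCompactSupport (Ω.indicator f) :=
  let ⟨_, _, hK, hfK⟩ := hf.exists_tsupport_indicator_subset
  hK.of_isClosed_subset (isClosed_tsupport _) hfK

lemma tsupport_indicator_subset [T2Space X] (hf : HasCompactSupportIn Ω f) :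
    tsupport (Ω.indicator f) ⊆ Ω :=
  let ⟨_, hKΩ, _, hfK⟩ := hf.exists_tsupport_indicator_subset
  hfK.trans hKΩ

end Topology

variable {E F : Type*} [NormedAddCommGroup E] [NormedSpace ℝ E] [NormedAddCommGroup F]
  [NormedSpace ℝ F] {Ω : Set E}

lemma contDiff_indicator {f : E → F} {n : WithTop ℕ∞} (hf : HasCompactSupportIn Ω f)
    (hΩ : IsOpen Ω) (hfΩ : ContDiffOn ℝ n f Ω) : ContDiff ℝ n (Ω.indicator f) := by
  refine contMDiff_iff_contDiff.mp (contMDiff_of_tsupport fun x hx => ?_)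
  have hxΩ : Ω ∈ 𝓝 x := hΩ.mem_nhds (hf.tsupport_indicator_subset hx)
  exact ((hfΩ.contDiffAt hxΩ).congr_of_eventuallyEq
    (Set.eqOn_indicator.eventuallyEq_of_mem hxΩ)).contMDiffAt

lemma prodMk_fderiv {f : E → F} (hf : HasCompactSupportIn Ω f) (hΩ : IsOpen Ω) :
    HasCompactSupportIn Ω fun x => (f x, fderiv ℝ f x) := by
  obtain ⟨K, hKΩ, hK, hf0⟩ := hf
  refine ⟨K, hKΩ, hK, fun x hx hxK => ?_⟩
  have hzero : f =ᶠ[𝓝 x] fun _ => 0 := by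
    filter_upwards [hΩ.mem_nhds hx, hK.isClosed.isOpen_compl.mem_nhds hxK] using hf0
  simp [hzero.fderiv_eq, hf0 x hx hxK]

variable [MeasurableSpace E] [BorelSpace E] {μ : Measure E}

lemma integrableOn [IsFiniteMeasureOnCompacts μ] {f : E → F} (hf : HasCompactSupportIn Ω f)
    (hΩ : IsOpen Ω) (hfΩ : ContinuousOn f Ω) : IntegrableOn f Ω μ :=
  (integrable_indicator_iff hΩ.measurableSet).mp
    ((contDiff_zero.mp (hf.contDiff_indicator hΩ (contDiffOn_zero.mpr hfΩ))
      ).integrable_of_hasCompactSupport hf.hasCompactSupport_indicator)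

lemma setIntegral_fderiv_eq_zero [FiniteDimensional ℝ E] [μ.IsAddHaarMeasure] {f : E → ℝ}
    (hf : HasCompactSupportIn Ω f) (hΩ : IsOpen Ω) (hfΩ : ContDiffOn ℝ 1 f Ω) (v : E) :
    ∫ x in Ω, fderiv ℝ f x v ∂μ = 0 := by
  have hsmooth : ContDiff ℝ 1 (Ω.indicator f) := hf.contDiff_indicator hΩ hfΩ
  have hcpt := hf.hasCompactSupport_indicator
  have hout (x : E) (hx : x ∉ Ω) : fderiv ℝ (Ω.indicator f) x v = 0 := by
    rw [fderiv_of_notMem_tsupport (𝕜 := ℝ) fun h => hx (hf.tsupport_indicator_subset h)]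
    rfl
  have hin : Set.EqOn (fun x => fderiv ℝ f x v) (fun x => fderiv ℝ (Ω.indicator f) x v) Ω :=
    fun x hx => by
      simp only [(Set.eqOn_indicator.eventuallyEq_of_mem (hΩ.mem_nhds hx)).fderiv_eq]
  have hcont : Continuous fun x => fderiv ℝ (Ω.indicator f) x v :=
    (hsmooth.continuous_fderiv one_ne_zero).clm_apply continuous_const
  have hparts := integral_mul_fderiv_eq_neg_fderiv_mul_of_integrable (μ := μ) (v := v)
    (f := fun _ => (1 : ℝ)) (g := Ω.indicator f) (by simp)
    (by simpa using hcont.integrable_of_hasCompactSupport (hcpt.fderiv_apply (𝕜 := ℝ) v))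
    (by simpa using hsmooth.continuous.integrable_of_hasCompactSupport hcpt)
    (fun x _ => differentiableAt_const _) (fun x _ => hsmooth.differentiable one_ne_zero x)
  rw [setIntegral_congr_fun hΩ.measurableSet hin,
    setIntegral_eq_integral_of_forall_compl_eq_zero hout]
  simpa using hparts

lemma integrableOn_mul_fderiv [IsFiniteMeasureOnCompacts μ] {f g : E → ℝ}
    (hg : HasCompactSupportIn Ω g) (hΩ : IsOpen Ω) (hfΩ : ContinuousOn f Ω)
    (hgΩ : ContDiffOn ℝ 1 g Ω) (v : E) : IntegrableOn (fun x => f x * fderiv ℝ g x v) Ω μ := by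
  refine ((hg.prodMk_fderiv hΩ).mono fun x _ hx => ?_).integrableOn hΩ
    (hfΩ.mul ((hgΩ.continuousOn_fderiv_of_isOpen hΩ le_rfl).clm_apply continuousOn_const))
  simp [(Prod.mk_eq_zero.mp hx).2]

lemma setIntegral_mul_fderiv [FiniteDimensional ℝ E] [μ.IsAddHaarMeasure] {f g : E → ℝ}
    (hg : HasCompactSupportIn Ω g) (hΩ : IsOpen Ω) (hfΩ : ContDiffOn ℝ 1 f Ω)
    (hgΩ : ContDiffOn ℝ 1 g Ω) (v : E) :
    ∫ x in Ω, f x * fderiv ℝ g x v ∂μ = -∫ x in Ω, g x * fderiv ℝ f x v ∂μ := by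
  have hdiff {k : E → ℝ} (hk : ContDiffOn ℝ 1 k Ω) {x : E} (hx : x ∈ Ω) :
      DifferentiableAt ℝ k x :=
    (hk.contDiffAt (hΩ.mem_nhds hx)).differentiableAt one_ne_zero
  have hfg : HasCompactSupportIn Ω fun x => f x * g x :=
    hg.mono fun x _ hx => by rw [hx, mul_zero]
  have hint : IntegrableOn (fun x => g x * fderiv ℝ f x v) Ω μ :=
    (hg.mono fun x _ hx => by rw [hx, zero_mul]).integrableOn hΩ (hgΩ.continuousOn.mul
      ((hfΩ.continuousOn_fderiv_of_isOpen hΩ le_rfl).clm_apply continuousOn_const))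
  have hprod : Set.EqOn (fun x => fderiv ℝ (fun y => f y * g y) x v)
      (fun x => f x * fderiv ℝ g x v + g x * fderiv ℝ f x v) Ω := fun x hx => by
    simp [fderiv_fun_mul (hdiff hfΩ hx) (hdiff hgΩ hx)]
  rw [eq_neg_iff_add_eq_zero,
    ← integral_add (hg.integrableOn_mul_fderiv hΩ hfΩ.continuousOn hgΩ v) hint,
    ← setIntegral_congr_fun hΩ.measurableSet hprod]
  exact hfg.setIntegral_fderiv_eq_zero hΩ (hfΩ.mul hgΩ) v

end HasCompactSupportIn

end CompactSupport

section PartialDerivatives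

variable {Ω : Set E2} {f g : E2 → ℝ} {x : E2} {i : Fin 2}

lemma contDiffOn_pdR (hΩ : IsOpen Ω) (hf : ContDiffOn ℝ ∞ f Ω) (i : Fin 2) :
    ContDiffOn ℝ ∞ (pdR i f) Ω :=
  (hf.fderiv_of_isOpen hΩ le_rfl).clm_apply contDiffOn_const

lemma pdR_mul (hf : DifferentiableAt ℝ f x) (hg : DifferentiableAt ℝ g x) :
    pdR i (fun y => f y * g y) x = f x * pdR i g x + g x * pdR i f x := by
  simp [pdR, fderiv_fun_mul hf hg]

lemma pdR_add (hf : DifferentiableAt ℝ f x) (hg : DifferentiableAt ℝ g x) :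
    pdR i (fun y => f y + g y) x = pdR i f x + pdR i g x := by
  simp [pdR, fderiv_fun_add hf hg]

lemma pdR_comp {φ : ℝ → ℝ} (hφ : DifferentiableAt ℝ φ (f x)) (hf : DifferentiableAt ℝ f x) :
    pdR i (fun y => φ (f y)) x = deriv φ (f x) * pdR i f x := by
  have hcomp : fderiv ℝ (fun y => φ (f y)) x = deriv φ (f x) • fderiv ℝ f x :=
    (hφ.hasDerivAt.comp_hasFDerivAt x hf.hasFDerivAt).fderiv
  simp [pdR, hcomp]

lemma pdC_eq_pdR_re_add_pdR_im {u : E2 → ℂ} (hu : DifferentiableAt ℝ u x) (i : Fin 2) :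
    pdC i u x =
      pdR i (fun y => (u y).re) x + pdR i (fun y => (u y).im) x * Complex.I := by
  have hre := (Complex.reCLM.hasFDerivAt.comp x hu.hasFDerivAt).fderiv
  have him := (Complex.imCLM.hasFDerivAt.comp x hu.hasFDerivAt).fderiv
  simp only [Function.comp_def, Complex.reCLM_apply, Complex.imCLM_apply] at hre him
  simp [pdR, pdC, hre, him, Complex.re_add_im]

lemma fderiv_fderiv_apply_single (hf : ContDiffAt ℝ 2 f x) (i j : Fin 2) :
    fderiv ℝ (fderiv ℝ f) x (EuclideanSpace.single i 1) (EuclideanSpace.single j 1) =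
      hess f x i j := by
  have hd : DifferentiableAt ℝ (fderiv ℝ f) x :=
    (hf.fderiv_right (m := 1) (by norm_num)).differentiableAt one_ne_zero
  have hcomp : fderiv ℝ (pdR j f) x = _ := fderiv_clm_apply hd (differentiableAt_const _)
  simp [hess, pdR.eq_1 i, hcomp]

lemma hess_symm (hf : ContDiffAt ℝ 2 f x) (i j : Fin 2) : hess f x i j = hess f x j i := by
  rw [← fderiv_fderiv_apply_single hf, ← fderiv_fderiv_apply_single hf]
  exact (hf.isSymmSndFDerivAt (by simp)).eq _ _

lemma fderiv_fderiv_apply_self (hf : ContDiffAt ℝ 2 f x) (y : E2) :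
    fderiv ℝ (fderiv ℝ f) x y y = y ⬝ᵥ hess f x *ᵥ y := by
  have hy : y = y 0 • EuclideanSpace.single (0 : Fin 2) (1 : ℝ) +
      y 1 • EuclideanSpace.single (1 : Fin 2) (1 : ℝ) := by
    ext i; fin_cases i <;> simp
  conv_lhs => rw [hy]
  simp only [map_add, map_smul, add_apply, smul_apply, fderiv_fderiv_apply_single hf, smul_eq_mul,
    dotProduct, Matrix.mulVec, Fin.sum_univ_two]
  ring

lemma trace_hess : (hess f x).trace = lapl f x := by
  simp [Matrix.trace, hess, lapl, Fin.sum_univ_two]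

end PartialDerivatives

section PauliForm

variable {Ω : Set E2} {A₁ A₂ B : E2 → ℝ} {h : ℝ} {u : E2 → ℂ} {x : E2}

/-- The magnetic Cauchy–Riemann operator `(h∂₁ - iA₁) + i(h∂₂ - iA₂)`: the Pauli form is the squared
`L²` norm of its values. -/
def magneticDbar (A₁ A₂ : E2 → ℝ) (h : ℝ) (u : E2 → ℂ) (x : E2) : ℂ :=
  (h * pdC 0 u x - Complex.I * A₁ x * u x) + Complex.I * (h * pdC 1 u x - Complex.I * A₂ x * u x)

lemma setIntegral_curl_mul {q : E2 → ℝ} (hΩ : IsOpen Ω) (hA₁ : ContDiffOn ℝ ∞ A₁ Ω)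
    (hA₂ : ContDiffOn ℝ ∞ A₂ Ω) (hB : ∀ x ∈ Ω, B x = pdR 0 A₂ x - pdR 1 A₁ x)
    (hqΩ : ContDiffOn ℝ ∞ q Ω) (hq : HasCompactSupportIn Ω q) :
    ∫ x in Ω, B x * q x = ∫ x in Ω, (A₁ x * pdR 1 q x - A₂ x * pdR 0 q x) := by
  have hparts {f : E2 → ℝ} (hf : ContDiffOn ℝ ∞ f Ω) (i : Fin 2) :
      ∫ x in Ω, f x * pdR i q x = -∫ x in Ω, q x * pdR i f x :=
    hq.setIntegral_mul_fderiv hΩ (hf.of_le (by simp)) (hqΩ.of_le (by simp)) _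
  have hint_left {f : E2 → ℝ} (hf : ContDiffOn ℝ ∞ f Ω) (i : Fin 2) :
      IntegrableOn (fun x => f x * pdR i q x) Ω :=
    hq.integrableOn_mul_fderiv hΩ hf.continuousOn (hqΩ.of_le (by simp)) _
  have hint_right {f : E2 → ℝ} (hf : ContDiffOn ℝ ∞ f Ω) (i : Fin 2) :
      IntegrableOn (fun x => q x * pdR i f x) Ω :=
    (hq.mono fun x _ hx => by rw [hx, zero_mul]).integrableOn hΩ
      (hqΩ.mul (contDiffOn_pdR hΩ hf i)).continuousOn
  rw [integral_sub (hint_left hA₁ 1) (hint_left hA₂ 0), hparts hA₁, hparts hA₂,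
    neg_sub_neg, ← integral_sub (hint_right hA₂ 0) (hint_right hA₁ 1)]
  exact setIntegral_congr_fun hΩ.measurableSet fun x hx => by simp only [hB x hx]; ring

lemma setIntegral_jacobian_eq_zero {a b : E2 → ℝ} (hΩ : IsOpen Ω) (ha : ContDiffOn ℝ ∞ a Ω)
    (hbΩ : ContDiffOn ℝ ∞ b Ω) (hb : HasCompactSupportIn Ω b) :
    ∫ x in Ω, (pdR 0 a x * pdR 1 b x - pdR 1 a x * pdR 0 b x) = 0 := by
  have hcurl (x : E2) (hx : x ∈ Ω) : (0 : ℝ) = pdR 0 (pdR 1 a) x - pdR 1 (pdR 0 a) x :=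
    (sub_eq_zero.mpr (hess_symm
      ((ha.contDiffAt (hΩ.mem_nhds hx)).of_le (by norm_cast)) 0 1)).symm
  rw [← setIntegral_curl_mul hΩ (contDiffOn_pdR hΩ ha 0) (contDiffOn_pdR hΩ ha 1) hcurl hbΩ hb]
  simp

lemma norm_sq_magneticDbar (hu : DifferentiableAt ℝ u x) :
    ‖magneticDbar A₁ A₂ h u x‖ ^ 2 =
      ‖(h : ℂ) * pdC 0 u x - Complex.I * (A₁ x : ℂ) * u x‖ ^ 2 +
        ‖(h : ℂ) * pdC 1 u x - Complex.I * (A₂ x : ℂ) * u x‖ ^ 2 -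
      h * (A₁ x * pdR 1 (fun y => ‖u y‖ ^ 2) x - A₂ x * pdR 0 (fun y => ‖u y‖ ^ 2) x) -
      2 * h ^ 2 * (pdR 0 (fun y => (u y).re) x * pdR 1 (fun y => (u y).im) x -
        pdR 1 (fun y => (u y).re) x * pdR 0 (fun y => (u y).im) x) := by
  have hre : DifferentiableAt ℝ (fun y => (u y).re) x := Complex.reCLM.differentiableAt.comp x hu
  have him : DifferentiableAt ℝ (fun y => (u y).im) x := Complex.imCLM.differentiableAt.comp x hu
  have hnorm (i : Fin 2) : pdR i (fun y => ‖u y‖ ^ 2) x =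
      2 * ((u x).re * pdR i (fun y => (u y).re) x + (u x).im * pdR i (fun y => (u y).im) x) := by
    simp only [← Complex.normSq_eq_norm_sq, Complex.normSq_apply]
    rw [pdR_add (hre.fun_mul hre) (him.fun_mul him), pdR_mul hre hre, pdR_mul him him]
    ring
  rw [hnorm, hnorm]
  simp only [magneticDbar, pdC_eq_pdR_re_add_pdR_im hu, ← Complex.normSq_eq_norm_sq,
    Complex.normSq_apply, Complex.add_re, Complex.sub_re, Complex.mul_re, Complex.ofReal_re,
    Complex.I_re, Complex.add_im, Complex.sub_im, Complex.mul_im, Complex.ofReal_im, Complex.I_im]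
  ring

lemma integrableOn_norm_sq_magneticDeriv {A : E2 → ℝ} (hΩ : IsOpen Ω) (hA : ContDiffOn ℝ ∞ A Ω)
    (hu : IsCptSmoothIn Ω u) (i : Fin 2) :
    IntegrableOn (fun x => ‖(h : ℂ) * pdC i u x - Complex.I * (A x : ℂ) * u x‖ ^ 2) Ω := by
  obtain ⟨husmooth, hucpt, huΩ⟩ := hu
  have hsupp := (HasCompactSupportIn.of_tsupport_subset hucpt huΩ).prodMk_fderiv hΩ
  refine (hsupp.mono fun x _ hx => ?_).integrableOn hΩ ?_
  · simp [pdC, Prod.mk_eq_zero.mp hx]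
  · have hpdC : Continuous (pdC i u) :=
      (husmooth.continuous_fderiv (by simp)).clm_apply continuous_const
    have hAc : ContinuousOn (fun x => (A x : ℂ)) Ω :=
      Complex.continuous_ofReal.comp_continuousOn hA.continuousOn
    have huc : Continuous u := husmooth.continuous
    fun_prop

theorem pauliQ_eq_integral_norm_sq_magneticDbar (hΩ : IsOpen Ω) (hA₁ : ContDiffOn ℝ ∞ A₁ Ω)
    (hA₂ : ContDiffOn ℝ ∞ A₂ Ω) (hB : ∀ x ∈ Ω, B x = pdR 0 A₂ x - pdR 1 A₁ x)
    (hu : IsCptSmoothIn Ω u) :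
    pauliQ Ω A₁ A₂ B h u = ∫ x in Ω, ‖magneticDbar A₁ A₂ h u x‖ ^ 2 := by
  have ⟨husmooth, hucpt, huΩ⟩ := hu
  have hsupp : HasCompactSupportIn Ω u := .of_tsupport_subset hucpt huΩ
  have hre : ContDiffOn ℝ ∞ (fun x => (u x).re) Ω :=
    (Complex.reCLM.contDiff.comp husmooth).contDiffOn
  have him : ContDiffOn ℝ ∞ (fun x => (u x).im) Ω :=
    (Complex.imCLM.contDiff.comp husmooth).contDiffOn
  have hnorm : ContDiffOn ℝ ∞ (fun x => ‖u x‖ ^ 2) Ω := (husmooth.norm_sq ℝ).contDiffOn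
  have him_supp : HasCompactSupportIn Ω fun x => (u x).im := hsupp.mono fun x _ hx => by simp [hx]
  have hnorm_supp : HasCompactSupportIn Ω fun x => ‖u x‖ ^ 2 :=
    hsupp.mono fun x _ hx => by simp [hx]
  have hint {f q : E2 → ℝ} (hf : ContDiffOn ℝ ∞ f Ω) (hqΩ : ContDiffOn ℝ ∞ q Ω)
      (hq : HasCompactSupportIn Ω q) (i : Fin 2) : IntegrableOn (fun x => f x * pdR i q x) Ω :=
    hq.integrableOn_mul_fderiv hΩ hf.continuousOn (hqΩ.of_le (by simp)) _
  have hint_curl : IntegrableOn (fun x => h * (A₁ x * pdR 1 (fun y => ‖u y‖ ^ 2) x -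
      A₂ x * pdR 0 (fun y => ‖u y‖ ^ 2) x)) Ω :=
    ((hint hA₁ hnorm hnorm_supp 1).sub (hint hA₂ hnorm hnorm_supp 0)).const_mul h
  have hint_jac : IntegrableOn (fun x => 2 * h ^ 2 * (pdR 0 (fun y => (u y).re) x *
      pdR 1 (fun y => (u y).im) x - pdR 1 (fun y => (u y).re) x * pdR 0 (fun y => (u y).im) x)) Ω :=
    ((hint (contDiffOn_pdR hΩ hre 0) him him_supp 1).sub
      (hint (contDiffOn_pdR hΩ hre 1) him him_supp 0)).const_mul _
  have hint_energy := (integrableOn_norm_sq_magneticDeriv (h := h) hΩ hA₁ hu 0).fun_add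
    (integrableOn_norm_sq_magneticDeriv (h := h) hΩ hA₂ hu 1)
  rw [setIntegral_congr_fun hΩ.measurableSet
      fun x _ => norm_sq_magneticDbar (husmooth.differentiable (by simp) x),
    integral_sub (hint_energy.fun_sub hint_curl) hint_jac, integral_sub hint_energy hint_curl,
    integral_const_mul, integral_const_mul, setIntegral_jacobian_eq_zero hΩ hre him him_supp,
    mul_zero, sub_zero, pauliQ, setIntegral_curl_mul hΩ hA₁ hA₂ hB hnorm hnorm_supp]

lemma lambdaP_nonneg (hΩ : IsOpen Ω) (hA₁ : ContDiffOn ℝ ∞ A₁ Ω) (hA₂ : ContDiffOn ℝ ∞ A₂ Ω)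
    (hB : ∀ x ∈ Ω, B x = pdR 0 A₂ x - pdR 1 A₁ x) : 0 ≤ lambdaP Ω A₁ A₂ B h := by
  refine Real.sInf_nonneg ?_
  rintro _ ⟨u, hu, -, rfl⟩
  rw [pauliQ_eq_integral_norm_sq_magneticDbar hΩ hA₁ hA₂ hB hu]
  positivity

lemma lambdaP_le (hΩ : IsOpen Ω) (hA₁ : ContDiffOn ℝ ∞ A₁ Ω) (hA₂ : ContDiffOn ℝ ∞ A₂ Ω)
    (hB : ∀ x ∈ Ω, B x = pdR 0 A₂ x - pdR 1 A₁ x) (hu : IsCptSmoothIn Ω u) (hu0 : u ≠ 0) :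
    lambdaP Ω A₁ A₂ B h ≤ pauliQ Ω A₁ A₂ B h u / ∫ x in Ω, ‖u x‖ ^ 2 := by
  refine csInf_le ⟨0, ?_⟩ ⟨u, hu, hu0, rfl⟩
  rintro _ ⟨v, hv, -, rfl⟩
  rw [pauliQ_eq_integral_norm_sq_magneticDbar hΩ hA₁ hA₂ hB hv]
  positivity

end PauliForm

section ScalarPotential

/-- A scalar potential of the magnetic field `lapl ψ` on a bounded open set `Ω`, normalized to
vanish on the boundary. -/
structure IsScalarPotential (Ω : Set E2) (ψ : E2 → ℝ) : Prop where
  isOpen : IsOpen Ω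
  isBounded : Bornology.IsBounded Ω
  contDiffOn : ContDiffOn ℝ ∞ ψ Ω
  continuousOn_closure : ContinuousOn ψ (closure Ω)
  eq_zero_of_mem_frontier : ∀ x ∈ frontier Ω, ψ x = 0

namespace IsScalarPotential

variable {Ω : Set E2} {B ψ : E2 → ℝ} {g : ℝ → ℝ} {h : ℝ} {x : E2}

lemma contDiffAt (hψ : IsScalarPotential Ω ψ) (hx : x ∈ Ω) : ContDiffAt ℝ ∞ ψ x :=
  hψ.contDiffOn.contDiffAt (hψ.isOpen.mem_nhds hx)

lemma contDiffOn_pdR (hψ : IsScalarPotential Ω ψ) (i : Fin 2) : ContDiffOn ℝ ∞ (pdR i ψ) Ω :=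
  _root_.contDiffOn_pdR hψ.isOpen hψ.contDiffOn i

lemma contDiffOn_lapl (hψ : IsScalarPotential Ω ψ) : ContDiffOn ℝ ∞ (lapl ψ) Ω :=
  (_root_.contDiffOn_pdR hψ.isOpen (hψ.contDiffOn_pdR 0) 0).add
    (_root_.contDiffOn_pdR hψ.isOpen (hψ.contDiffOn_pdR 1) 1)

lemma pdR_comp (hψ : IsScalarPotential Ω ψ) (hg : Differentiable ℝ g) (hx : x ∈ Ω) (i : Fin 2) :
    pdR i (fun y => g (ψ y)) x = deriv g (ψ x) * pdR i ψ x :=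
  _root_.pdR_comp (hg _) ((hψ.contDiffAt hx).differentiableAt (by simp))

lemma hasCompactSupportIn_comp (hψ : IsScalarPotential Ω ψ) (hg : g =ᶠ[𝓝 0] 0) :
    HasCompactSupportIn Ω fun x => g (ψ x) := by
  obtain ⟨N, hgN, hN, h0N⟩ := eventually_nhds_iff.mp hg
  refine ⟨closure Ω ∩ ψ ⁻¹' Nᶜ, ?_, ?_, ?_⟩
  · rintro x ⟨hx, hxN⟩
    by_contra hxΩ
    have hxfr : x ∈ frontier Ω := hψ.isOpen.frontier_eq ▸ ⟨hx, hxΩ⟩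
    exact hxN (by rwa [hψ.eq_zero_of_mem_frontier x hxfr])
  · exact hψ.isBounded.isCompact_closure.of_isClosed_subset
      (hψ.continuousOn_closure.preimage_isClosed_of_isClosed isClosed_closure hN.isClosed_compl)
      Set.inter_subset_left
  · intro x hx hxK
    exact hgN _ (by_contra fun hxN => hxK ⟨subset_closure hx, hxN⟩)

lemma integrableOn_mul_comp (hψ : IsScalarPotential Ω ψ) (hg : Continuous g) (hg0 : g =ᶠ[𝓝 0] 0)
    {q : E2 → ℝ} (hq : ContinuousOn q Ω) : IntegrableOn (fun x => q x * g (ψ x)) Ω :=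
  ((hψ.hasCompactSupportIn_comp hg0).mono fun x _ hx => by rw [hx, mul_zero]).integrableOn
    hψ.isOpen (hq.mul (hg.comp_continuousOn hψ.contDiffOn.continuousOn))

lemma lapl_eq_curl :
    lapl ψ x = pdR 0 (fun y => pdR 0 ψ y) x - pdR 1 (fun y => -pdR 1 ψ y) x := by
  simp [lapl, pdR.eq_1 1 (fun y => -pdR 1 ψ y), pdR.eq_1 1 (pdR 1 ψ)]

lemma setIntegral_lapl_mul_comp (hψ : IsScalarPotential Ω ψ) (hg : ContDiff ℝ ∞ g)
    (hg0 : g =ᶠ[𝓝 0] 0) :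
    ∫ x in Ω, lapl ψ x * g (ψ x) =
      -∫ x in Ω, (pdR 0 ψ x ^ 2 + pdR 1 ψ x ^ 2) * deriv g (ψ x) := by
  rw [setIntegral_curl_mul hψ.isOpen (hψ.contDiffOn_pdR 1).neg (hψ.contDiffOn_pdR 0)
    (fun _ _ => lapl_eq_curl) (q := fun x => g (ψ x)) (hg.comp_contDiffOn hψ.contDiffOn)
    (hψ.hasCompactSupportIn_comp hg0), ← integral_neg]
  refine setIntegral_congr_fun hψ.isOpen.measurableSet fun x hx => ?_
  simp only [hψ.pdR_comp (hg.differentiable (by simp)) hx]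
  ring

lemma nonpos_of_lapl_pos (hψ : IsScalarPotential Ω ψ) (hΔ : ∀ y ∈ Ω, 0 ≤ lapl ψ y) (hx : x ∈ Ω)
    (hΔx : 0 < lapl ψ x) : ψ x ≤ 0 := by
  by_contra! hpos
  let g (s : ℝ) : ℝ := smoothRamp (4 * s / ψ x - 1)
  have hg : ContDiff ℝ ∞ g := contDiff_smoothRamp.comp (by fun_prop)
  have hg0 : g =ᶠ[𝓝 0] 0 := by
    have hlim : Tendsto (fun s => 4 * s / ψ x - 1) (𝓝 0) (𝓝 (-1)) :=
      Continuous.tendsto' (by fun_prop) _ _ (by simp)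
    filter_upwards [hlim.eventually_lt_const neg_one_lt_zero] with s hs
      using smoothRamp_of_nonpos hs.le
  have hgmono : Monotone g := monotone_smoothRamp.comp fun s t hst => by gcongr
  have hgx : 0 < g (ψ x) := by
    have := sub_one_le_smoothRamp (4 * ψ x / ψ x - 1)
    rw [mul_div_cancel_right₀ _ hpos.ne'] at this
    simp only [g, mul_div_cancel_right₀ _ hpos.ne']
    linarith
  let F : E2 → ℝ := Ω.indicator fun y => lapl ψ y * g (ψ y)
  have hFsupp : HasCompactSupportIn Ω fun y => lapl ψ y * g (ψ y) :=
    (hψ.hasCompactSupportIn_comp hg0).mono fun y _ hy => by rw [hy, mul_zero]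
  have hFcont : Continuous F := (hFsupp.contDiff_indicator hψ.isOpen
    (hψ.contDiffOn_lapl.mul (hg.comp_contDiffOn hψ.contDiffOn))).continuous
  have hFpos : 0 < ∫ y, F y :=
    hFcont.integral_pos_of_hasCompactSupport_nonneg_nonzero hFsupp.hasCompactSupport_indicator
      (Set.indicator_nonneg fun y hy => mul_nonneg (hΔ y hy) (smoothRamp_nonneg _))
      (x := x) (by simp only [F, Set.indicator_of_mem hx]; positivity)
  rw [integral_indicator hψ.isOpen.measurableSet, hψ.setIntegral_lapl_mul_comp hg hg0] at hFpos
  have : 0 ≤ ∫ y in Ω, (pdR 0 ψ y ^ 2 + pdR 1 ψ y ^ 2) * deriv g (ψ y) :=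
    integral_nonneg fun y => mul_nonneg (by positivity) hgmono.deriv_nonneg
  linarith

lemma neg_of_isLocalMin (hψ : IsScalarPotential Ω ψ) (hΔ : ∀ y ∈ Ω, 0 ≤ lapl ψ y) (hx : x ∈ Ω)
    (hmin : IsLocalMin ψ x) (hess_pos : (hess ψ x).PosDef) : ψ x < 0 := by
  let e : E2 := EuclideanSpace.single 0 1
  have hψx : ContDiffAt ℝ 2 ψ x := (hψ.contDiffAt hx).of_le (by norm_cast)
  have hΔx : 0 < lapl ψ x := trace_hess (f := ψ) ▸ hess_pos.trace_pos
  have hray : Tendsto (fun t : ℝ => x + t • e) (𝓝[>] 0) (𝓝 x) :=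
    tendsto_add_smul (tendsto_id.mono_left nhdsWithin_le_nhds) x e
  have hnonpos : ∀ᶠ y in 𝓝 x, ψ y ≤ 0 := by
    have hΩx : Ω ∈ 𝓝 x := hψ.isOpen.mem_nhds hx
    filter_upwards [hΩx, (hψ.contDiffOn_lapl.continuousOn.continuousAt hΩx).eventually_const_lt hΔx]
      with y hy hΔy using hψ.nonpos_of_lapl_pos hΔ hy hΔy
  have hee : 0 < fderiv ℝ (fderiv ℝ ψ) x e e / 2 := by
    rw [fderiv_fderiv_apply_single hψx]
    exact half_pos hess_pos.diag_pos
  have hlt : ∀ᶠ t in 𝓝[>] (0 : ℝ), 0 < (ψ (x + t • e) - ψ x) / t ^ 2 :=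
    (tendsto_sub_div_sq_of_fderiv_eq_zero hψx hmin.fderiv_eq_zero e).eventually_const_lt hee
  obtain ⟨t, ⟨hle, hlt⟩, ht⟩ := (((hray.eventually hnonpos).and hlt).and
    self_mem_nhdsWithin).exists
  exact (sub_pos.mp ((div_pos_iff_of_pos_right (pow_pos ht 2)).mp hlt)).trans_le hle

lemma isCptSmoothIn_indicator_comp (hψ : IsScalarPotential Ω ψ) (hg : ContDiff ℝ ∞ g)
    (hg0 : g =ᶠ[𝓝 0] 0) : IsCptSmoothIn Ω (Ω.indicator fun x => (g (ψ x) : ℂ)) := by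
  have hsupp : HasCompactSupportIn Ω fun x => (g (ψ x) : ℂ) :=
    (hψ.hasCompactSupportIn_comp hg0).mono fun x _ hx => by rw [hx, Complex.ofReal_zero]
  exact ⟨hsupp.contDiff_indicator hψ.isOpen
    (Complex.ofRealCLM.contDiff.comp_contDiffOn (hg.comp_contDiffOn hψ.contDiffOn)),
    hsupp.hasCompactSupport_indicator, hsupp.tsupport_indicator_subset⟩

lemma pdC_indicator_comp (hψ : IsScalarPotential Ω ψ) (hg : Differentiable ℝ g) (hx : x ∈ Ω)
    (i : Fin 2) :
    pdC i (Ω.indicator fun y => (g (ψ y) : ℂ)) x = deriv g (ψ x) * pdR i ψ x := by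
  have hloc : Ω.indicator (fun y => (g (ψ y) : ℂ)) =ᶠ[𝓝 x] fun y => (g (ψ y) : ℂ) :=
    Set.eqOn_indicator.eventuallyEq_of_mem (hψ.isOpen.mem_nhds hx)
  have hd : DifferentiableAt ℝ (fun y => g (ψ y)) x :=
    (hg _).comp x ((hψ.contDiffAt hx).differentiableAt (by simp))
  have hofReal := (Complex.ofRealCLM.hasFDerivAt.comp x hd.hasFDerivAt).fderiv
  simp only [Function.comp_def, Complex.ofRealCLM_apply] at hofReal
  rw [← Complex.ofReal_mul, ← hψ.pdR_comp hg hx, pdC, hloc.fderiv_eq, hofReal]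
  rfl

lemma magneticDbar_indicator_comp (hψ : IsScalarPotential Ω ψ) (hg : Differentiable ℝ g)
    (hx : x ∈ Ω) :
    magneticDbar (fun y => -pdR 1 ψ y) (fun y => pdR 0 ψ y) h
        (Ω.indicator fun y => (g (ψ y) : ℂ)) x =
      (h * deriv g (ψ x) + g (ψ x) : ℝ) * (pdR 0 ψ x + pdR 1 ψ x * Complex.I) := by
  simp only [magneticDbar, hψ.pdC_indicator_comp hg hx, Set.indicator_of_mem hx]
  push_cast
  linear_combination (-pdR 0 ψ x * g (ψ x)) * Complex.I_sq

lemma pauliQ_indicator_comp (hψ : IsScalarPotential Ω ψ) (hB : ∀ y ∈ Ω, lapl ψ y = B y)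
    (hg : ContDiff ℝ ∞ g) (hg0 : g =ᶠ[𝓝 0] 0) :
    pauliQ Ω (fun y => -pdR 1 ψ y) (fun y => pdR 0 ψ y) B h
        (Ω.indicator fun y => (g (ψ y) : ℂ)) =
      ∫ y in Ω, (pdR 0 ψ y ^ 2 + pdR 1 ψ y ^ 2) * (h * deriv g (ψ y) + g (ψ y)) ^ 2 := by
  rw [pauliQ_eq_integral_norm_sq_magneticDbar hψ.isOpen (hψ.contDiffOn_pdR 1).neg
    (hψ.contDiffOn_pdR 0) (fun y hy => (hB y hy).symm.trans lapl_eq_curl)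
    (hψ.isCptSmoothIn_indicator_comp hg hg0)]
  refine setIntegral_congr_fun hψ.isOpen.measurableSet fun x hx => ?_
  simp only [hψ.magneticDbar_indicator_comp (hg.differentiable (by simp)) hx]
  rw [norm_mul, mul_pow, Complex.norm_real, Real.norm_eq_abs, sq_abs, ← Complex.normSq_eq_norm_sq,
    Complex.normSq_add_mul_I, mul_comm]

end IsScalarPotential

end ScalarPotential

section TrialProfile

variable {h : ℝ}

/-- The cutoff `k_h(s)`, vanishing near `s = 0`, which turns functions of a scalar potential into
functions compactly supported in `Ω`. It is a smooth truncation of `1 - e^{2s/h}`, the minimizer of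
`∫ e^{-2s/h} k'(s)² ds` over `s < 0` subject to `k(0) = 0` and `k(-∞) = 1`. -/
def boundaryCutoff (h s : ℝ) : ℝ := h * smoothRamp ((1 - Real.exp (2 * s / h)) / h - 1)

/-- The profile `g_h` of the trial states `g_h(ψ) = e^{-ψ/h} k_h(ψ)`: a zero mode `e^{-ψ/h}` of the
magnetic Cauchy–Riemann operator, cut off near the boundary. -/
def trialProfile (h s : ℝ) : ℝ := Real.exp (-s / h) * boundaryCutoff h s

lemma contDiff_boundaryCutoff : ContDiff ℝ ∞ (boundaryCutoff h) :=
  contDiff_const.mul (contDiff_smoothRamp.comp (by fun_prop))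

lemma contDiff_trialProfile : ContDiff ℝ ∞ (trialProfile h) :=
  ContDiff.mul (by fun_prop) contDiff_boundaryCutoff

lemma boundaryCutoff_eventuallyEq_zero : boundaryCutoff h =ᶠ[𝓝 0] 0 := by
  have hlim : Tendsto (fun s => (1 - Real.exp (2 * s / h)) / h - 1) (𝓝 0) (𝓝 (-1)) :=
    Continuous.tendsto' (by fun_prop) _ _ (by simp)
  filter_upwards [hlim.eventually_lt_const neg_one_lt_zero] with s hs
  rw [boundaryCutoff, smoothRamp_of_nonpos hs.le, mul_zero, Pi.zero_apply]

lemma trialProfile_eventuallyEq_zero : trialProfile h =ᶠ[𝓝 0] 0 :=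
  boundaryCutoff_eventuallyEq_zero.mono fun s hs => by
    rw [trialProfile, hs, Pi.zero_apply, mul_zero]

lemma hasDerivAt_boundaryCutoff (hh : h ≠ 0) (s : ℝ) :
    HasDerivAt (boundaryCutoff h) (-(2 / h) * Real.exp (2 * s / h) *
      Real.smoothTransition ((1 - Real.exp (2 * s / h)) / h - 1)) s := by
  have hexp : HasDerivAt (fun s => (1 - Real.exp (2 * s / h)) / h - 1)
      (-(Real.exp (2 * s / h) * (2 / h)) / h) s := by
    have := (((hasDerivAt_id s).const_mul 2).div_const h).exp
    simpa using ((this.const_sub 1).div_const h).sub_const 1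
  refine (((hasDerivAt_smoothRamp _).comp s hexp).const_mul h).congr_deriv ?_
  field_simp

lemma boundaryCutoff_le_one (hh : 0 < h) (s : ℝ) : boundaryCutoff h s ≤ 1 := by
  have harg : (1 - Real.exp (2 * s / h)) / h - 1 ≤ 1 / h := by
    have : (1 - Real.exp (2 * s / h)) / h ≤ 1 / h := by gcongr; linarith [Real.exp_pos (2 * s / h)]
    linarith
  have hramp := (monotone_smoothRamp harg).trans (smoothRamp_le (by positivity))
  rw [boundaryCutoff]
  calc h * smoothRamp _ ≤ h * (1 / h) := by gcongr
    _ = 1 := mul_one_div_cancel hh.ne'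

lemma one_sub_exp_sub_le_boundaryCutoff (hh : 0 < h) (s : ℝ) :
    1 - Real.exp (2 * s / h) - 2 * h ≤ boundaryCutoff h s := by
  calc 1 - Real.exp (2 * s / h) - 2 * h = h * ((1 - Real.exp (2 * s / h)) / h - 1 - 1) := by
        field_simp; ring
    _ ≤ boundaryCutoff h s := mul_le_mul_of_nonneg_left (sub_one_le_smoothRamp _) hh.le

lemma tendsto_boundaryCutoff {ι : Type*} {l : Filter ι} {h s : ι → ℝ} {a : ℝ}
    (hh : Tendsto h l (𝓝[>] 0)) (hs : Tendsto s l (𝓝 a)) (ha : a < 0) :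
    Tendsto (fun i => boundaryCutoff (h i) (s i)) l (𝓝 1) := by
  have hpos : ∀ᶠ i in l, 0 < h i := hh.eventually self_mem_nhdsWithin
  have hdiv : Tendsto (fun i => 2 * s i / h i) l atBot :=
    (hs.const_mul 2).neg_mul_atTop (by linarith) (tendsto_inv_nhdsGT_zero.comp hh)
  have hlower : Tendsto (fun i => 1 - Real.exp (2 * s i / h i) - 2 * h i) l (𝓝 1) := by
    simpa using ((Real.tendsto_exp_atBot.comp hdiv).const_sub 1).sub
      ((hh.mono_right nhdsWithin_le_nhds).const_mul 2)
  exact tendsto_of_tendsto_of_tendsto_of_le_of_le' hlower tendsto_const_nhds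
    (hpos.mono fun i hi => one_sub_exp_sub_le_boundaryCutoff hi _)
    (hpos.mono fun i hi => boundaryCutoff_le_one hi _)

lemma mul_deriv_trialProfile_add (hh : h ≠ 0) (s : ℝ) :
    h * deriv (trialProfile h) s + trialProfile h s =
      h * Real.exp (-s / h) * deriv (boundaryCutoff h) s := by
  have hexp : HasDerivAt (fun s => Real.exp (-s / h)) (Real.exp (-s / h) * (-1 / h)) s :=
    ((hasDerivAt_neg s).div_const h).exp
  have hprofile := hexp.mul (hasDerivAt_boundaryCutoff hh s).differentiableAt.hasDerivAt
  rw [show deriv (trialProfile h) s = _ from hprofile.deriv, trialProfile]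
  field_simp
  ring

lemma sq_mul_deriv_trialProfile_add_le (hh : 0 < h) (s : ℝ) :
    (h * deriv (trialProfile h) s + trialProfile h s) ^ 2 ≤
      -(2 * h * deriv (boundaryCutoff h) s) := by
  set θ := Real.smoothTransition ((1 - Real.exp (2 * s / h)) / h - 1)
  have hθ : θ ^ 2 ≤ θ := pow_le_of_le_one (Real.smoothTransition.nonneg _)
    (Real.smoothTransition.le_one _) two_ne_zero
  have hexp : Real.exp (-s / h) ^ 2 * Real.exp (2 * s / h) = 1 := by
    rw [← Real.exp_nat_mul, ← Real.exp_add, Real.exp_eq_one_iff]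
    push_cast
    ring
  rw [mul_deriv_trialProfile_add hh.ne', (hasDerivAt_boundaryCutoff hh.ne' s).deriv]
  calc (h * Real.exp (-s / h) * (-(2 / h) * Real.exp (2 * s / h) * θ)) ^ 2
      = 4 * (Real.exp (-s / h) ^ 2 * Real.exp (2 * s / h)) * Real.exp (2 * s / h) * θ ^ 2 := by
        field_simp; ring
    _ ≤ 4 * Real.exp (2 * s / h) * θ := by rw [hexp, mul_one]; gcongr
    _ = -(2 * h * (-(2 / h) * Real.exp (2 * s / h) * θ)) := by field_simp; ring

lemma tendsto_exp_mul_sq_trialProfile {ι : Type*} {l : Filter ι} {r s : ι → ℝ} {m q : ℝ}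
    (hr : Tendsto r l (𝓝[>] 0)) (hs : Tendsto s l (𝓝 m)) (hm : m < 0)
    (hq : Tendsto (fun i => (s i - m) / r i) l (𝓝 q)) :
    Tendsto (fun i => Real.exp (2 * m / r i) * trialProfile (r i) (s i) ^ 2) l
      (𝓝 (Real.exp (-(2 * q)))) := by
  have hexp := (Real.continuous_exp.tendsto _).comp (hq.const_mul 2).neg
  have hlim := hexp.mul ((tendsto_boundaryCutoff hr hs hm).pow 2)
  rw [one_pow, mul_one] at hlim
  refine hlim.congr fun i => ?_
  rw [trialProfile, mul_pow, ← mul_assoc, ← Real.exp_nat_mul, ← Real.exp_add, Function.comp_apply]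
  congr 2
  push_cast
  ring

end TrialProfile

section TrialState

/-- The trial state `e^{-ψ/h} k_h(ψ)` for the Pauli eigenvalue, extended by zero outside `Ω` since
`lambdaP` is an infimum over functions defined on the whole plane. -/
def trialState (Ω : Set E2) (ψ : E2 → ℝ) (h : ℝ) : E2 → ℂ :=
  Ω.indicator fun x => (trialProfile h (ψ x) : ℂ)

namespace IsScalarPotential

variable {Ω : Set E2} {B ψ : E2 → ℝ} {h : ℝ}

lemma isCptSmoothIn_trialState (hψ : IsScalarPotential Ω ψ) :
    IsCptSmoothIn Ω (trialState Ω ψ h) :=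
  hψ.isCptSmoothIn_indicator_comp contDiff_trialProfile trialProfile_eventuallyEq_zero

lemma pauliQ_trialState_le (hψ : IsScalarPotential Ω ψ) (hB : ∀ x ∈ Ω, lapl ψ x = B x)
    (hB0 : ∀ x ∈ Ω, 0 ≤ B x) (hBint : IntegrableOn B Ω) (hh : 0 < h) :
    pauliQ Ω (fun x => -pdR 1 ψ x) (fun x => pdR 0 ψ x) B h (trialState Ω ψ h) ≤
      2 * h * ∫ x in Ω, B x := by
  have hlapl : IntegrableOn (fun x => lapl ψ x * boundaryCutoff h (ψ x)) Ω :=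
    hψ.integrableOn_mul_comp contDiff_boundaryCutoff.continuous boundaryCutoff_eventuallyEq_zero
      hψ.contDiffOn_lapl.continuousOn
  have hflux : IntegrableOn (fun x => (pdR 0 ψ x ^ 2 + pdR 1 ψ x ^ 2) *
      deriv (boundaryCutoff h) (ψ x)) Ω :=
    hψ.integrableOn_mul_comp (contDiff_boundaryCutoff.continuous_deriv (by simp))
      (by simpa using boundaryCutoff_eventuallyEq_zero.deriv)
      (((hψ.contDiffOn_pdR 0).pow 2).add ((hψ.contDiffOn_pdR 1).pow 2)).continuousOn
  have hcutoff : ∫ x in Ω, lapl ψ x * boundaryCutoff h (ψ x) ≤ ∫ x in Ω, B x :=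
    setIntegral_mono_on hlapl hBint hψ.isOpen.measurableSet fun x hx => by
      rw [hB x hx]
      exact mul_le_of_le_one_right (hB0 x hx) (boundaryCutoff_le_one hh _)
  rw [trialState, hψ.pauliQ_indicator_comp hB contDiff_trialProfile trialProfile_eventuallyEq_zero]
  calc ∫ x in Ω, (pdR 0 ψ x ^ 2 + pdR 1 ψ x ^ 2) *
        (h * deriv (trialProfile h) (ψ x) + trialProfile h (ψ x)) ^ 2
      ≤ ∫ x in Ω, -(2 * h) * ((pdR 0 ψ x ^ 2 + pdR 1 ψ x ^ 2) *
          deriv (boundaryCutoff h) (ψ x)) := by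
        refine integral_mono_of_nonneg (.of_forall fun x => by positivity) (hflux.const_mul _)
          (.of_forall fun x => ?_)
        linarith [mul_le_mul_of_nonneg_left (sq_mul_deriv_trialProfile_add_le hh (ψ x))
          (by positivity : 0 ≤ pdR 0 ψ x ^ 2 + pdR 1 ψ x ^ 2)]
    _ = 2 * h * ∫ x in Ω, lapl ψ x * boundaryCutoff h (ψ x) := by
        rw [integral_const_mul, hψ.setIntegral_lapl_mul_comp contDiff_boundaryCutoff
          boundaryCutoff_eventuallyEq_zero, neg_mul, mul_neg]
    _ ≤ 2 * h * ∫ x in Ω, B x := by gcongr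

lemma tendsto_exp_mul_sq_trialProfile_comp (hψ : IsScalarPotential Ω ψ) {x : E2} (hx : x ∈ Ω)
    (hneg : ψ x < 0) (hcrit : fderiv ℝ ψ x = 0) (y : E2) :
    Tendsto (fun h => Real.exp (2 * ψ x / h) * trialProfile h (ψ (x + √h • y)) ^ 2) (𝓝[>] 0)
      (𝓝 (Real.exp (-(y ⬝ᵥ hess ψ x *ᵥ y)))) := by
  have hψx : ContDiffAt ℝ 2 ψ x := (hψ.contDiffAt hx).of_le (by norm_cast)
  have hpt : Tendsto (fun h => ψ (x + √h • y)) (𝓝[>] 0) (𝓝 (ψ x)) :=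
    hψx.continuousAt.tendsto.comp
      (tendsto_add_smul (tendsto_sqrt_nhdsGT_zero.mono_right nhdsWithin_le_nhds) x y)
  have htaylor : Tendsto (fun h => (ψ (x + √h • y) - ψ x) / h) (𝓝[>] 0)
      (𝓝 ((y ⬝ᵥ hess ψ x *ᵥ y) / 2)) := by
    rw [← fderiv_fderiv_apply_self hψx]
    refine ((tendsto_sub_div_sq_of_fderiv_eq_zero hψx hcrit y).comp
      tendsto_sqrt_nhdsGT_zero).congr' ?_
    filter_upwards [self_mem_nhdsWithin] with h hh
    simp only [Function.comp_apply, Real.sq_sqrt (le_of_lt hh)]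
  have hlim := tendsto_exp_mul_sq_trialProfile tendsto_id hpt hneg htaylor
  rwa [mul_div_cancel₀ _ two_ne_zero] at hlim

lemma eventually_lt_setIntegral_norm_sq_trialState {ι : Type*} [Fintype ι]
    (hψ : IsScalarPotential Ω ψ) {m : ℝ} (hm : m < 0) {xs : ι → E2} (hinj : xs.Injective)
    (hxs : ∀ j, xs j ∈ Ω) (hψxs : ∀ j, ψ (xs j) = m) (hcrit : ∀ j, fderiv ℝ ψ (xs j) = 0)
    (hhess : ∀ j, (hess ψ (xs j)).PosDef) {c : ℝ}
    (hc : c < Real.pi * ∑ j, (hess ψ (xs j)).det ^ (-(1 : ℝ) / 2)) :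
    ∀ᶠ h in 𝓝[>] 0, c * h < Real.exp (2 * m / h) * ∫ x in Ω, ‖trialState Ω ψ h x‖ ^ 2 := by
  let F (h : ℝ) : E2 → ℝ :=
    Ω.indicator fun x => Real.exp (2 * m / h) * trialProfile h (ψ x) ^ 2
  have hF (h : ℝ) : ∫ x, F h x = Real.exp (2 * m / h) * ∫ x in Ω, ‖trialState Ω ψ h x‖ ^ 2 := by
    rw [integral_indicator hψ.isOpen.measurableSet, ← integral_const_mul]
    refine setIntegral_congr_fun hψ.isOpen.measurableSet fun x hx => ?_
    simp only [trialState, Set.indicator_of_mem hx, Complex.norm_real, Real.norm_eq_abs, sq_abs]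
  have hsq (h : ℝ) : (fun s => trialProfile h s ^ 2) =ᶠ[𝓝 0] 0 :=
    trialProfile_eventuallyEq_zero.mono fun s (hs : trialProfile h s = 0) => by simp [hs]
  have hFint (h : ℝ) : Integrable (F h) :=
    (integrable_indicator_iff hψ.isOpen.measurableSet).mpr <|
      hψ.integrableOn_mul_comp (contDiff_trialProfile.continuous.pow 2) (hsq h) continuousOn_const
  have hlim (j : ι) (y : E2) : Tendsto (fun h => F h (xs j + √h • y)) (𝓝[>] 0)
      (𝓝 (Real.exp (-(y ⬝ᵥ hess ψ (xs j) *ᵥ y)))) := by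
    have hpt := tendsto_add_smul (tendsto_sqrt_nhdsGT_zero.mono_right nhdsWithin_le_nhds) (xs j) y
    have hprofile := hψ.tendsto_exp_mul_sq_trialProfile_comp (hxs j) ((hψxs j).trans_lt hm)
      (hcrit j) y
    rw [hψxs j] at hprofile
    refine hprofile.congr' ?_
    filter_upwards [hpt.eventually (hψ.isOpen.mem_nhds (hxs j))] with h hh
    simp only [F, Set.indicator_of_mem hh]
  have hmass := eventually_lt_integral_of_concentration volume hFint
    (fun h => Set.indicator_nonneg fun x _ => by positivity) tendsto_sqrt_nhdsGT_zero hinj hlim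
    (fun j => integrable_exp_neg_quadraticForm (hhess j)) (c := c) (by
      simpa only [integral_exp_neg_quadraticForm (hhess _), ← Finset.mul_sum, Fintype.card_fin,
        Nat.cast_ofNat, div_self (two_ne_zero' ℝ), Real.rpow_one] using hc)
  filter_upwards [hmass, self_mem_nhdsWithin] with h hlt hh
  rwa [hF, finrank_euclideanSpace_fin, Real.sq_sqrt (le_of_lt hh)] at hlt

lemma lambdaP_le_div_setIntegral_norm_sq_trialState (hψ : IsScalarPotential Ω ψ)
    (hB : ∀ x ∈ Ω, lapl ψ x = B x) (hB0 : ∀ x ∈ Ω, 0 ≤ B x) (hBint : IntegrableOn B Ω)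
    (hh : 0 < h) (hnorm : 0 < ∫ x in Ω, ‖trialState Ω ψ h x‖ ^ 2) :
    lambdaP Ω (fun x => -pdR 1 ψ x) (fun x => pdR 0 ψ x) B h ≤
      2 * h * (∫ x in Ω, B x) / ∫ x in Ω, ‖trialState Ω ψ h x‖ ^ 2 := by
  have hne : trialState Ω ψ h ≠ 0 := fun hzero => by simp [hzero] at hnorm
  refine (lambdaP_le hψ.isOpen (hψ.contDiffOn_pdR 1).neg (hψ.contDiffOn_pdR 0)
    (fun x hx => (hB x hx).symm.trans lapl_eq_curl) hψ.isCptSmoothIn_trialState hne).trans ?_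
  gcongr
  exact hψ.pauliQ_trialState_le hB hB0 hBint hh

theorem eventually_exp_mul_lambdaP_le {ι : Type*} [Fintype ι] [Nonempty ι]
    (hψ : IsScalarPotential Ω ψ) (hB : ∀ x ∈ Ω, lapl ψ x = B x) (hB0 : ∀ x ∈ Ω, 0 ≤ B x)
    (hBint : IntegrableOn B Ω) {m : ℝ} (hm : ∀ x ∈ Ω, m ≤ ψ x) {xs : ι → E2}
    (hinj : xs.Injective) (hxs : ∀ j, xs j ∈ Ω) (hψxs : ∀ j, ψ (xs j) = m)
    (hhess : ∀ j, (hess ψ (xs j)).PosDef) {b : ℝ}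
    (hb : 4 * ((1 / (2 * Real.pi)) * ∫ x in Ω, B x) *
      (∑ j, (hess ψ (xs j)).det ^ (-(1 : ℝ) / 2))⁻¹ < b) :
    ∀ᶠ h in 𝓝[>] 0, Real.exp (-2 * m / h) *
      lambdaP Ω (fun x => -pdR 1 ψ x) (fun x => pdR 0 ψ x) B h ≤ b := by
  have hmin (j : ι) : IsLocalMin ψ (xs j) := by
    filter_upwards [hψ.isOpen.mem_nhds (hxs j)] with x hx using (hψxs j).trans_le (hm x hx)
  have hneg : m < 0 := by
    obtain ⟨j⟩ := ‹Nonempty ι›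
    rw [← hψxs j]
    exact hψ.neg_of_isLocalMin (fun x hx => (hB0 x hx).trans_eq (hB x hx).symm) (hxs j) (hmin j)
      (hhess j)
  have hsum : 0 < ∑ j, (hess ψ (xs j)).det ^ (-(1 : ℝ) / 2) :=
    Finset.sum_pos (fun j _ => Real.rpow_pos_of_pos (hhess j).det_pos _) Finset.univ_nonempty
  have hB_nonneg : 0 ≤ ∫ x in Ω, B x := setIntegral_nonneg hψ.isOpen.measurableSet hB0
  have hb0 : 0 < b := lt_of_le_of_lt (by positivity) hb
  have hc : 2 * (∫ x in Ω, B x) / b <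
      Real.pi * ∑ j, (hess ψ (xs j)).det ^ (-(1 : ℝ) / 2) := by
    rw [← div_eq_mul_inv, div_lt_iff₀ hsum] at hb
    rw [div_lt_iff₀ hb0]
    calc 2 * ∫ x in Ω, B x = Real.pi * (4 * (1 / (2 * Real.pi) * ∫ x in Ω, B x)) := by
          field_simp; ring
      _ < Real.pi * (b * ∑ j, (hess ψ (xs j)).det ^ (-(1 : ℝ) / 2)) := by gcongr
      _ = _ := by ring
  filter_upwards [hψ.eventually_lt_setIntegral_norm_sq_trialState hneg hinj hxs hψxs
    (fun j => (hmin j).fderiv_eq_zero) hhess hc, self_mem_nhdsWithin] with h hmass (hh : 0 < h)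
  have hnorm : 0 < ∫ x in Ω, ‖trialState Ω ψ h x‖ ^ 2 :=
    pos_of_mul_pos_right (lt_of_le_of_lt (by positivity) hmass) (Real.exp_nonneg _)
  rw [neg_mul, neg_div, Real.exp_neg, inv_mul_le_iff₀ (Real.exp_pos _)]
  refine (hψ.lambdaP_le_div_setIntegral_norm_sq_trialState hB hB0 hBint hh hnorm).trans
    ((div_le_iff₀ hnorm).mpr ?_)
  calc 2 * h * ∫ x in Ω, B x = b * (2 * (∫ x in Ω, B x) / b * h) := by field_simp
    _ ≤ b * (Real.exp (2 * m / h) * ∫ x in Ω, ‖trialState Ω ψ h x‖ ^ 2) := by gcongr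
    _ = _ := by ring

end IsScalarPotential

end TrialState

theorem stmt6_general {Ω : Set E2} {B ψ : E2 → ℝ} (hψ : IsScalarPotential Ω ψ)
    (hB : ∀ x ∈ Ω, lapl ψ x = B x) (hB0 : ∀ x ∈ Ω, 0 ≤ B x) (hBint : IntegrableOn B Ω)
    {ι : Type*} [Fintype ι] [Nonempty ι] {xs : ι → E2} (hinj : xs.Injective)
    (hmins : Set.range xs ⊆ {x | x ∈ Ω ∧ ψ x = sInf (ψ '' Ω)})
    (hhess : ∀ j, (hess ψ (xs j)).PosDef) :
    limsup
      (fun h : ℝ => Real.exp (-2 * sInf (ψ '' Ω) / h) *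
        lambdaP Ω (fun x => -pdR 1 ψ x) (fun x => pdR 0 ψ x) B h)
      (𝓝[>] 0)
      ≤ 4 * ((1 / (2 * Real.pi)) * ∫ x in Ω, B x) *
          (∑ j, (hess ψ (xs j)).det ^ (-(1 : ℝ) / 2))⁻¹ := by
  have hbdd : BddBelow (ψ '' Ω) :=
    (hψ.isBounded.isCompact_closure.bddBelow_image hψ.continuousOn_closure).mono
      (Set.image_mono subset_closure)
  have hcobdd : IsCoboundedUnder (· ≤ ·) (𝓝[>] 0) fun h : ℝ =>
      Real.exp (-2 * sInf (ψ '' Ω) / h) *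
        lambdaP Ω (fun x => -pdR 1 ψ x) (fun x => pdR 0 ψ x) B h :=
    isCoboundedUnder_le_of_le _ fun h => mul_nonneg (Real.exp_nonneg _)
      (lambdaP_nonneg hψ.isOpen (hψ.contDiffOn_pdR 1).neg (hψ.contDiffOn_pdR 0)
        fun x hx => (hB x hx).symm.trans IsScalarPotential.lapl_eq_curl)
  refine le_of_forall_gt_imp_ge_of_dense fun b hb => limsup_le_of_le hcobdd ?_
  exact hψ.eventually_exp_mul_lambdaP_le hB hB0 hBint
    (fun x hx => csInf_le hbdd (Set.mem_image_of_mem ψ hx)) hinj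
    (fun j => (hmins ⟨j, rfl⟩).1) (fun j => (hmins ⟨j, rfl⟩).2) hhess hb

/-- sharp upper bound in the nondegenerate case. If the minimum of `ψ` is
attained at finitely many points, all with positive definite Hessian, then
`limsup_{h→0⁺} e^{−2ψ_min/h} λ_{P₋}(h) ≤ 4Φ (Σ_j (det Hess ψ(x_j))^{−1/2})⁻¹`. -/
theorem stmt6 (Ω : Set E2) (hΩo : IsOpen Ω) (hΩne : Ω.Nonempty)
    (hΩb : Bornology.IsBounded Ω)
    (hsc : SimplyConnectedSpace Ω)
    (hsb : HasSmoothBoundary Ω)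
    (U : Set E2) (hU : IsOpen U) (hclU : closure Ω ⊆ U)
    (B ψ : E2 → ℝ)
    (hBsm : ContDiffOn ℝ (⊤ : ℕ∞) B U) (hBpos : ∀ x ∈ closure Ω, 0 < B x)
    (hψsm : ContDiffOn ℝ (⊤ : ℕ∞) ψ U)
    (hΔ : ∀ x ∈ Ω, lapl ψ x = B x)
    (hbd : ∀ x ∈ frontier Ω, ψ x = 0)
    (N : ℕ) (hN : 0 < N) (xs : Fin N → E2) (hinj : Function.Injective xs)
    (hmins : {x | x ∈ Ω ∧ ψ x = sInf (ψ '' Ω)} = Set.range xs)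
    (hhess : ∀ j, (hess ψ (xs j)).PosDef) :
    limsup
      (fun h : ℝ => Real.exp (-2 * sInf (ψ '' Ω) / h) *
        lambdaP Ω (fun x => -pdR 1 ψ x) (fun x => pdR 0 ψ x) B h)
      (𝓝[>] 0)
      ≤ 4 * ((1 / (2 * Real.pi)) * ∫ x in Ω, B x) *
          (∑ j : Fin N, (hess ψ (xs j)).det ^ (-(1:ℝ)/2))⁻¹ := by
  have : Nonempty (Fin N) := Fin.pos_iff_nonempty.mp hN
  have hBint : IntegrableOn B Ω := (hBsm.continuousOn.mono hclU).integrableOn_compact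
    hΩb.isCompact_closure |>.mono_set subset_closure
  exact stmt6_general ⟨hΩo, hΩb, hψsm.mono (subset_closure.trans hclU),
    hψsm.continuousOn.mono hclU, hbd⟩ hΔ (fun x hx => (hBpos x (subset_closure hx)).le) hBint hinj
    hmins.ge hhess
end
end

section
/- Let Ω ⊂ ℝ² be a nonempty bounded open simply connected set with smooth boundary, B smooth on a neighborhood of the closure of Ω with B(x) > 0 there, ψ smooth on a neighborhood of the closure of Ω with Δψ = B in Ω and ψ = 0 on ∂Ω, ψ_min := inf_Ω ψ, and A = (−∂₂ψ, ∂₁ψ) the canonical vector potential. Assume there exists x₀ ∈ Ω with ψ(x₀) = ψ_min and det Hess ψ(x₀) = 0 (degenerate Hessian at a minimum point). Then there are constants C > 0 and h₀ > 0 such that λ_{P₋}(h) ≤ C h^{1/4} exp(2ψ_min/h) for all 0 < h < h₀. -/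
/-!
The function `e^(-ψ/h)` is a zero mode of the Pauli operator, and the Rayleigh quotient is tested
on a cut-off of it in the variable `ψ` itself: `u = f(ψ/h)` with `f(t) = e^(-t)` for `t ≤ -2` and
`f(t) = 0` for `t ≥ -1`. Integration by parts gives `Q_h(u) = ∫ (f' + f)²(ψ/h) |∇ψ|²`, where
`(f' + f)²` is supported in `[-2, -1]`. Since `div (F(ψ) ∇ψ) = F'(ψ) |∇ψ|² + F(ψ) Δψ`, a second
integration by parts bounds this energy by `h ∫ (f' + f)² · ∫ |B| = O(h)`.

On the other hand `∫ |u|² ≥ e^(-2c/h) |{ψ ≤ c}|` for `c = ψ_min + K h`. If the Hessian at the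
minimum point kills a direction `v`, then `ψ - ψ_min` grows at most quartically along `v` (its even
part has no quadratic or cubic term, and it is nonnegative) and quadratically across `v`. Thus
`{ψ ≤ ψ_min + K h}` contains a box of sides `h^(1/4)` and `h^(1/2)`, and the quotient is
`O(h / h^(3/4)) · e^(2 ψ_min/h)`.
-/

open MeasureTheory Filter Topology

noncomputable section

open Set Asymptotics

section Taylor

variable {E F : Type*} [NormedAddCommGroup E] [NormedSpace ℝ E]
  [NormedAddCommGroup F] [NormedSpace ℝ F]

theorem isBigO_sub_sum_iteratedDeriv {f : ℝ → F} {a : ℝ} {n : ℕ} (hf : ContDiffAt ℝ n f a) :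
    (fun t => f t - ∑ k ∈ Finset.range n, ((k.factorial : ℝ)⁻¹ * (t - a) ^ k) • iteratedDeriv k f a)
      =O[𝓝 a] fun t => (t - a) ^ n := by
  obtain ⟨r, hr, hball⟩ := Metric.eventually_nhds_iff_ball.1 (hf.eventually (by simp))
  have ha : a ∈ Metric.ball a r := Metric.mem_ball_self hr
  have htaylor := taylor_isLittleO (convex_ball a r) ha fun t ht => (hball t ht).contDiffWithinAt
  rw [Metric.isOpen_ball.nhdsWithin_eq ha] at htaylor
  have hlast : (fun t => ((n.factorial : ℝ)⁻¹ * (t - a) ^ n) • iteratedDeriv n f a)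
      =O[𝓝 a] fun t => (t - a) ^ n :=
    .of_bound (‖(n.factorial : ℝ)⁻¹‖ * ‖iteratedDeriv n f a‖) <| .of_forall fun t => by
      rw [norm_smul, norm_mul]
      exact le_of_eq (by ring)
  refine (htaylor.isBigO.add hlast).congr_left fun t => ?_
  simp only [taylor_within_apply, iteratedDerivWithin_of_isOpen Metric.isOpen_ball ha,
    Finset.sum_range_succ]
  abel

/-- The even part of `g` about `a` has no cubic term, so it is `O((t - a)⁴)`; at a minimum it
dominates `g - g a`. -/
theorem isBigO_sub_pow_four_of_isLocalMin {g : ℝ → ℝ} {a : ℝ} (hg : ContDiffAt ℝ 4 g a)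
    (hmin : IsLocalMin g a) (hg₂ : deriv (deriv g) a = 0) :
    (fun t => g t - g a) =O[𝓝 a] fun t => (t - a) ^ 4 := by
  set R : ℝ → ℝ := fun t => g t - ∑ k ∈ Finset.range 4,
    ((k.factorial : ℝ)⁻¹ * (t - a) ^ k) • iteratedDeriv k g a
  have hR : R =O[𝓝 a] fun t => (t - a) ^ 4 := isBigO_sub_sum_iteratedDeriv (mod_cast hg)
  have hreflect : Tendsto (fun t => 2 * a - t) (𝓝 a) (𝓝 a) :=
    Continuous.tendsto' (by fun_prop) _ _ (by ring)
  have hR' : (fun t => R (2 * a - t)) =O[𝓝 a] fun t => (t - a) ^ 4 :=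
    (hR.comp_tendsto hreflect).congr_right fun t => by simp only [Function.comp_apply]; ring
  have heven : ∀ t, g t - g a + (g (2 * a - t) - g a) = R t + R (2 * a - t) := fun t => by
    have hg₂' : iteratedDeriv 2 g a = 0 := by
      rw [iteratedDeriv_succ, iteratedDeriv_one, hg₂]
    simp only [R, Finset.sum_range_succ, Finset.sum_range_zero, smul_eq_mul, hg₂',
      iteratedDeriv_zero]
    ring
  refine IsBigO.trans (.of_bound 1 ?_) (hR.add hR')
  filter_upwards [hmin, hreflect.eventually hmin] with t ht ht'
  rw [one_mul, ← heven, Real.norm_of_nonneg (sub_nonneg.2 ht),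
    Real.norm_of_nonneg (by linarith)]
  linarith

theorem hasDerivAt_comp_add_smul {f : E → F} {x v : E} {t : ℝ}
    (hf : DifferentiableAt ℝ f (x + t • v)) :
    HasDerivAt (fun t : ℝ => f (x + t • v)) (fderiv ℝ f (x + t • v) v) t := by
  have hline : HasDerivAt (fun t : ℝ => x + t • v) v t := by
    simpa using ((hasDerivAt_id t).smul_const v).const_add x
  exact hf.hasFDerivAt.comp_hasDerivAt t hline

theorem tendsto_add_smul_zero (x v : E) : Tendsto (fun t : ℝ => x + t • v) (𝓝 0) (𝓝 x) :=
  Continuous.tendsto' (by fun_prop) _ _ (by simp)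

theorem contDiffAt_comp_add_smul {f : E → F} {x : E} {n : WithTop ℕ∞} (hf : ContDiffAt ℝ n f x)
    (v : E) : ContDiffAt ℝ n (fun t : ℝ => f (x + t • v)) 0 :=
  ContDiffAt.comp (0 : ℝ) (by simpa using hf) (by fun_prop)

theorem deriv_deriv_comp_add_smul {f : E → F} {x : E} (hf : ContDiffAt ℝ 2 f x) (v : E) :
    deriv (deriv fun t : ℝ => f (x + t • v)) 0 = fderiv ℝ (fderiv ℝ f) x v v := by
  have hderiv : deriv (fun t : ℝ => f (x + t • v)) =ᶠ[𝓝 0] fun t => fderiv ℝ f (x + t • v) v := by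
    filter_upwards [(tendsto_add_smul_zero x v).eventually (hf.eventually (by simp))] with t ht
    exact (hasDerivAt_comp_add_smul (ht.differentiableAt (by simp))).deriv
  have hf' : DifferentiableAt ℝ (fderiv ℝ f) (x + (0 : ℝ) • v) := by
    simpa using (hf.fderiv_right (m := 1) (by norm_num)).differentiableAt (by simp)
  rw [hderiv.deriv_eq, ((hasDerivAt_comp_add_smul hf').clm_apply (hasDerivAt_const 0 v)).deriv]
  simp

theorem isBigO_fderiv_comp_add_smul {f : E → F} {x v : E} (hf : ContDiffAt ℝ 3 f x)
    (hx : fderiv ℝ f x = 0) (hv : fderiv ℝ (fderiv ℝ f) x v = 0) :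
    (fun t : ℝ => fderiv ℝ f (x + t • v)) =O[𝓝 0] fun t => t ^ 2 := by
  have hf' : ContDiffAt ℝ 2 (fderiv ℝ f) x := hf.fderiv_right (by norm_num)
  have hderiv : deriv (fun t : ℝ => fderiv ℝ f (x + t • v)) 0 = 0 := by
    rw [(hasDerivAt_comp_add_smul (by simpa using hf'.differentiableAt (by simp))).deriv]
    simpa using hv
  simpa [Finset.sum_range_succ, hx, hderiv] using
    isBigO_sub_sum_iteratedDeriv (n := 2) (contDiffAt_comp_add_smul hf' v)

theorem isBigO_sub_sub_fderiv {f : E → F} {x : E} (hf : ContDiffAt ℝ 2 f x) :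
    (fun p : E × E => f (x + p.1 + p.2) - f (x + p.1) - fderiv ℝ f (x + p.1) p.2)
      =O[𝓝 0] fun p => ‖p.2‖ ^ 2 := by
  obtain ⟨K, s, hs, hK⟩ := (hf.fderiv_right (m := 1) (by norm_num)).exists_lipschitzOnWith
  obtain ⟨r, hr, hball⟩ := Metric.eventually_nhds_iff_ball.1
    (((hf.eventually (by simp)).mono fun y hy => hy.differentiableAt (by simp)).and hs)
  have hbase : ∀ᶠ p : E × E in 𝓝 0, x + p.1 ∈ Metric.ball x r :=
    (Continuous.tendsto' (by fun_prop) _ _ (by simp)).eventually (Metric.ball_mem_nhds x hr)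
  have htip : ∀ᶠ p : E × E in 𝓝 0, x + p.1 + p.2 ∈ Metric.ball x r :=
    (Continuous.tendsto' (by fun_prop) _ _ (by simp)).eventually (Metric.ball_mem_nhds x hr)
  refine .of_bound K ?_
  filter_upwards [hbase, htip] with p hp hp'
  have hseg := (convex_ball x r).segment_subset hp hp'
  have hmean := (convex_segment (x + p.1) (x + p.1 + p.2)).norm_image_sub_le_of_norm_fderiv_le'
    (φ := fderiv ℝ f (x + p.1)) (C := K * ‖p.2‖) (fun y hy => (hball y (hseg hy)).1)
    (fun y hy => (hK.norm_sub_le (hball y (hseg hy)).2 (hball _ hp).2).trans <| by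
      gcongr
      simpa using norm_sub_le_of_mem_segment hy)
    (left_mem_segment ..) (right_mem_segment ..)
  rw [norm_pow, norm_norm, sq, ← mul_assoc]
  simpa using hmean

theorem isBigO_sub_of_isLocalMin {f : E → ℝ} {x v : E} (hf : ContDiffAt ℝ 4 f x)
    (hmin : IsLocalMin f x) (hv : fderiv ℝ (fderiv ℝ f) x v = 0) :
    (fun p : ℝ × E => f (x + p.1 • v + p.2) - f x) =O[𝓝 0] fun p => p.1 ^ 4 + ‖p.2‖ ^ 2 := by
  have hfst : Tendsto Prod.fst (𝓝 (0 : ℝ × E)) (𝓝 0) := continuous_fst.tendsto _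
  have hle : ∀ {u : ℝ × E → ℝ}, (∀ p, |u p| ≤ p.1 ^ 4 + ‖p.2‖ ^ 2) →
      u =O[𝓝 0] fun p => p.1 ^ 4 + ‖p.2‖ ^ 2 := fun hu => .of_norm_le hu
  have halong : (fun p : ℝ × E => f (x + p.1 • v) - f x) =O[𝓝 0] fun p => p.1 ^ 4 := by
    have hline : IsLocalMin (fun t : ℝ => f (x + t • v)) 0 := by
      simpa [IsLocalMin, IsMinFilter] using (tendsto_add_smul_zero x v).eventually hmin
    simpa [Function.comp_def] using (isBigO_sub_pow_four_of_isLocalMin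
      (contDiffAt_comp_add_smul hf v) hline
      (by rw [deriv_deriv_comp_add_smul (hf.of_le (by norm_num)), hv, zero_apply])).comp_tendsto
        hfst
  have hfirst : (fun p : ℝ × E => fderiv ℝ f (x + p.1 • v) p.2)
      =O[𝓝 0] fun p => p.1 ^ 2 * ‖p.2‖ := by
    have h := ((isBigO_fderiv_comp_add_smul (hf.of_le (by norm_num)) hmin.fderiv_eq_zero
      hv).comp_tendsto hfst).norm_left.mul (isBigO_refl (fun p : ℝ × E => ‖p.2‖) (𝓝 0))
    exact IsBigO.trans (.of_norm_le fun p => (fderiv ℝ f (x + p.1 • v)).le_opNorm p.2) h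
  have hsecond := (isBigO_sub_sub_fderiv (hf.of_le (by norm_num))).comp_tendsto
    (k := fun p : ℝ × E => (p.1 • v, p.2)) (Continuous.tendsto' (by fun_prop) 0 0 (by simp))
  refine (((halong.trans <| hle fun p => ?_).add (hfirst.trans <| hle fun p => ?_)).add
    (hsecond.trans <| hle fun p => ?_)).congr_left fun p => ?_
  · rw [abs_of_nonneg (by positivity)]
    exact le_add_of_nonneg_right (by positivity)
  · rw [abs_of_nonneg (by positivity)]
    nlinarith [sq_nonneg (p.1 ^ 2 - ‖p.2‖), sq_nonneg (p.1 ^ 2), sq_nonneg ‖p.2‖]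
  · rw [Function.comp_apply, abs_of_nonneg (by positivity)]
    exact le_add_of_nonneg_left (by positivity)
  · simp only [Function.comp_apply]
    ring

theorem deriv_deriv_nonpos_of_isLocalMax {g : ℝ → ℝ} {a : ℝ} (hg : ContinuousAt g a)
    (hmax : IsLocalMax g a) : deriv (deriv g) a ≤ 0 := by
  by_contra! hpos
  have hmin : IsLocalMin g a := isLocalMin_of_deriv_deriv_pos hpos hmax.deriv_eq_zero hg
  have hconst : g =ᶠ[𝓝 a] fun _ => g a := by
    filter_upwards [hmin, hmax] with t using fun h₁ h₂ => le_antisymm h₂ h₁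
  exact hpos.ne' (by rw [hconst.deriv.deriv_eq]; simp)

theorem fderiv_fderiv_apply_nonpos_of_isLocalMax {f : E → ℝ} {x : E} (hf : ContDiffAt ℝ 2 f x)
    (hmax : IsLocalMax f x) (v : E) : fderiv ℝ (fderiv ℝ f) x v v ≤ 0 := by
  rw [← deriv_deriv_comp_add_smul hf]
  refine deriv_deriv_nonpos_of_isLocalMax (contDiffAt_comp_add_smul hf v).continuousAt ?_
  simpa [IsLocalMax, IsMaxFilter] using (tendsto_add_smul_zero x v).eventually hmax

end Taylor

section SublevelVolume

variable {E ι : Type*} [NormedAddCommGroup E] [InnerProductSpace ℝ E] [Fintype ι]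

/-- The box about `x` of half-side `b` in the direction `e i₀` and `b ^ 2` in the other directions
of the basis `e`: the shape of a sublevel set that is quartic along `e i₀` and quadratic across. -/
def thinBox (e : OrthonormalBasis ι ℝ E) (i₀ : ι) (x : E) (b : ℝ) : Set E :=
  {y | |e.repr (y - x) i₀| ≤ b ∧ ∀ i ≠ i₀, |e.repr (y - x) i| ≤ b ^ 2}

theorem norm_sub_repr_smul_le (e : OrthonormalBasis ι ℝ E) {z : E} {i₀ : ι} {c : ℝ} (hc : 0 ≤ c)
    (hz : ∀ i ≠ i₀, |e.repr z i| ≤ c) :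
    ‖z - e.repr z i₀ • e i₀‖ ≤ Fintype.card ι * c := by
  classical
  nth_rewrite 1 [← e.sum_repr z]
  rw [← Finset.sum_erase_eq_sub (Finset.mem_univ i₀)]
  calc ‖∑ i ∈ Finset.univ.erase i₀, e.repr z i • e i‖
      ≤ ∑ _i ∈ Finset.univ.erase i₀, c := norm_sum_le_of_le _ fun i hi => by
        simpa [norm_smul] using hz i (Finset.ne_of_mem_erase hi)
    _ ≤ ∑ _i : ι, c := Finset.sum_le_univ_sum_of_nonneg fun _ => hc
    _ = Fintype.card ι * c := by simp

theorem exists_thinBox_subset_sublevel {f : E → ℝ} {x : E} {Ω : Set E}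
    (e : OrthonormalBasis ι ℝ E) (i₀ : ι) (hf : ContDiffAt ℝ 4 f x) (hmin : IsLocalMin f x)
    (hdeg : fderiv ℝ (fderiv ℝ f) x (e i₀) = 0) (hΩ : Ω ∈ 𝓝 x) :
    ∃ C, ∀ᶠ b in 𝓝[>] (0 : ℝ), thinBox e i₀ x b ⊆ {y ∈ Ω | f y ≤ f x + C * b ^ 4} := by
  set n : ℝ := (Fintype.card ι : ℝ)
  obtain ⟨C, hC, hfC⟩ := (isBigO_sub_of_isLocalMin hf hmin hdeg).exists_nonneg
  have hnear : ∀ᶠ p : ℝ × E in 𝓝 0, x + p.1 • e i₀ + p.2 ∈ Ω :=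
    (Continuous.tendsto' (by fun_prop) _ _ (by simp)).eventually hΩ
  obtain ⟨δ, hδ, hball⟩ := Metric.eventually_nhds_iff_ball.1 (hfC.bound.and hnear)
  have hsmall : ∀ᶠ b : ℝ in 𝓝[>] 0, max b (n * b ^ 2) < δ :=
    (Continuous.tendsto' (by fun_prop) 0 0 (by simp)).mono_left nhdsWithin_le_nhds
      |>.eventually_lt_const hδ
  refine ⟨C * (1 + n ^ 2), ?_⟩
  filter_upwards [hsmall] with b hb y ⟨hyi₀, hy⟩
  obtain ⟨hbδ, hnbδ⟩ := max_lt_iff.1 hb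
  generalize ht : e.repr (y - x) i₀ = t at hyi₀
  obtain ⟨k, hk⟩ : ∃ k, y = x + t • e i₀ + k := ⟨y - (x + t • e i₀), by abel⟩
  have hkb : ‖k‖ ≤ n * b ^ 2 := by
    have h := norm_sub_repr_smul_le e (by positivity) hy
    rwa [ht, show y - x - t • e i₀ = k by rw [hk]; abel] at h
  have hp : (t, k) ∈ Metric.ball (0 : ℝ × E) δ := by
    rw [mem_ball_zero_iff, Prod.norm_def, max_lt_iff, Real.norm_eq_abs]
    exact ⟨hyi₀.trans_lt hbδ, hkb.trans_lt hnbδ⟩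
  obtain ⟨hfy, hyΩ⟩ := hball _ hp
  rw [← hk] at hfy hyΩ
  refine ⟨hyΩ, sub_le_iff_le_add'.1 ?_⟩
  calc f y - f x ≤ C * ‖t ^ 4 + ‖k‖ ^ 2‖ := (le_abs_self _).trans hfy
    _ = C * (|t| ^ 4 + ‖k‖ ^ 2) := by
      rw [Real.norm_of_nonneg (by positivity), Even.pow_abs ⟨2, rfl⟩ t]
    _ ≤ C * (b ^ 4 + (n * b ^ 2) ^ 2) := by gcongr
    _ = C * (1 + n ^ 2) * b ^ 4 := by ring

variable [FiniteDimensional ℝ E] [MeasurableSpace E] [BorelSpace E]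

theorem volume_orthonormalBasis_box (e : OrthonormalBasis ι ℝ E) (x : E) (r : ι → ℝ) :
    volume {y | ∀ i, |e.repr (y - x) i| ≤ r i} = ∏ i, ENNReal.ofReal (2 * r i) := by
  have hcoord : MeasurePreserving (fun y => WithLp.ofLp (e.repr (y - x))) volume volume :=
    (PiLp.volume_preserving_ofLp ι).comp
      (e.measurePreserving_repr.comp (measurePreserving_sub_right volume x))
  have hbox : {y | ∀ i, |e.repr (y - x) i| ≤ r i}
      = (fun y => WithLp.ofLp (e.repr (y - x))) ⁻¹' Icc (-r) r := by
    ext y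
    simp [abs_le, Pi.le_def, forall_and]
  rw [hbox, hcoord.measure_preimage measurableSet_Icc.nullMeasurableSet, Real.volume_Icc_pi]
  simp only [Pi.neg_apply, sub_neg_eq_add, two_mul]

theorem ofReal_pow_le_volume_thinBox (e : OrthonormalBasis ι ℝ E) (i₀ : ι) (x : E) {b : ℝ}
    (hb : 0 ≤ b) :
    ENNReal.ofReal (b ^ (2 * Fintype.card ι - 1)) ≤ volume (thinBox e i₀ x b) := by
  classical
  set r : ι → ℝ := Function.update (fun _ => b ^ 2) i₀ b
  have hr : ∀ i, 0 ≤ r i :=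
    (Function.forall_update_iff _ fun _ s => 0 ≤ s).2 ⟨hb, fun _ _ => sq_nonneg b⟩
  have hbox : {y | ∀ i, |e.repr (y - x) i| ≤ r i} = thinBox e i₀ x b := by
    ext y
    exact Function.forall_update_iff _ fun i s => |e.repr (y - x) i| ≤ s
  have hprod : ∏ i, r i = b ^ (2 * Fintype.card ι - 1) := by
    have hcard : 0 < Fintype.card ι := Fintype.card_pos_iff.2 ⟨i₀⟩
    rw [Finset.prod_update_of_mem (Finset.mem_univ i₀), Finset.prod_const, ← pow_mul,
      ← pow_succ', Finset.card_univ_sdiff, Finset.card_singleton]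
    congr 1
    omega
  rw [← hbox, volume_orthonormalBasis_box, ← hprod, ENNReal.ofReal_prod_of_nonneg fun i _ => hr i]
  gcongr with i
  linarith [hr i]

theorem exists_ofReal_pow_le_volume_sublevel {f : E → ℝ} {x v : E} {Ω : Set E}
    (hf : ContDiffAt ℝ 4 f x) (hmin : IsLocalMin f x) (hv : v ≠ 0)
    (hdeg : fderiv ℝ (fderiv ℝ f) x v = 0) (hΩ : Ω ∈ 𝓝 x) :
    ∃ C, ∀ᶠ b in 𝓝[>] (0 : ℝ), ENNReal.ofReal (b ^ (2 * Module.finrank ℝ E - 1))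
      ≤ volume {y ∈ Ω | f y ≤ f x + C * b ^ 4} := by
  have : Nontrivial E := ⟨v, 0, hv⟩
  let i₀ : Fin (Module.finrank ℝ E) := ⟨0, Module.finrank_pos⟩
  have hunit : Orthonormal ℝ (({i₀} : Set _).domRestrict fun _ => ‖v‖⁻¹ • v) :=
    ⟨fun _ => norm_smul_inv_norm hv, fun i j hij => (hij (Subsingleton.elim i j)).elim⟩
  obtain ⟨e, he⟩ := hunit.exists_orthonormalBasis_extension_of_card_eq (Fintype.card_fin _).symm
  obtain ⟨C, hC⟩ := exists_thinBox_subset_sublevel e i₀ hf hmin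
    (by rw [he i₀ rfl, map_smul, hdeg, smul_zero]) hΩ
  refine ⟨C, ?_⟩
  filter_upwards [hC, self_mem_nhdsWithin] with b hbC hb
  simpa only [Fintype.card_fin] using
    (ofReal_pow_le_volume_thinBox e i₀ x (mem_Ioi.1 hb).le).trans (measure_mono hbC)

end SublevelVolume

theorem exists_ofReal_rpow_le_volume_sublevel {f : E2 → ℝ} {x v : E2} {Ω : Set E2}
    (hf : ContDiffAt ℝ 4 f x) (hmin : IsLocalMin f x) (hv : v ≠ 0)
    (hdeg : fderiv ℝ (fderiv ℝ f) x v = 0) (hΩ : Ω ∈ 𝓝 x) :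
    ∃ C, ∀ᶠ h in 𝓝[>] (0 : ℝ), ENNReal.ofReal (h ^ (3 / 4 : ℝ))
      ≤ volume {y ∈ Ω | f y ≤ f x + C * h} := by
  obtain ⟨C, hC⟩ := exists_ofReal_pow_le_volume_sublevel hf hmin hv hdeg hΩ
  have hroot : Tendsto (fun h : ℝ => h ^ (1 / 4 : ℝ)) (𝓝[>] 0) (𝓝[>] 0) := by
    refine tendsto_nhdsWithin_iff.2 ⟨?_, ?_⟩
    · exact ((Real.continuous_rpow_const (by norm_num)).tendsto' 0 0 (by simp)).mono_left
        nhdsWithin_le_nhds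
    · filter_upwards [self_mem_nhdsWithin] with h hh using Real.rpow_pos_of_pos hh _
  refine ⟨C, ?_⟩
  filter_upwards [hroot.eventually hC, self_mem_nhdsWithin] with h hvol hh
  have hpow : ∀ k : ℕ, (h ^ (1 / 4 : ℝ)) ^ k = h ^ (k / 4 : ℝ) := fun k => by
    rw [← Real.rpow_mul_natCast (mem_Ioi.1 hh).le, div_mul_eq_mul_div, one_mul]
  simpa only [finrank_euclideanSpace_fin, hpow, Nat.reduceMul, Nat.reduceSub, Nat.cast_ofNat,
    div_self (four_ne_zero' ℝ), Real.rpow_one] using hvol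

section CompactlySupported

theorem tsupport_indicator_subset {X M : Type*} [TopologicalSpace X] [Zero M] {Ω S : Set X}
    {g : X → M} (hS : IsClosed S) (hg : ∀ x ∈ Ω \ S, g x = 0) : tsupport (Ω.indicator g) ⊆ S := by
  refine closure_minimal (fun x hx => ?_) hS
  rw [support_indicator] at hx
  by_contra hxS
  exact hx.2 (hg x ⟨hx.1, hxS⟩)

variable {E F : Type*} [NormedAddCommGroup E] [NormedSpace ℝ E]
  [NormedAddCommGroup F] [NormedSpace ℝ F] {Ω S : Set E} {g : E → F}

theorem contDiff_indicator {n : WithTop ℕ∞} (hΩ : IsOpen Ω) (hS : IsClosed S) (hSΩ : S ⊆ Ω)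
    (hgn : ContDiffOn ℝ n g Ω) (hg : ∀ x ∈ Ω \ S, g x = 0) : ContDiff ℝ n (Ω.indicator g) := by
  refine contDiff_iff_contDiffAt.2 fun x => ?_
  by_cases hx : x ∈ Ω
  · exact (hgn.contDiffAt (hΩ.mem_nhds hx)).congr_of_eventuallyEq
      (eqOn_indicator.eventuallyEq_of_mem (hΩ.mem_nhds hx))
  · have hxS : x ∉ tsupport (Ω.indicator g) := fun h => hx (hSΩ (tsupport_indicator_subset hS hg h))
    exact contDiffAt_const.congr_of_eventuallyEq (notMem_tsupport_iff_eventuallyEq.1 hxS)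

theorem fderiv_indicator_eqOn (hΩ : IsOpen Ω) :
    EqOn (fderiv ℝ (Ω.indicator g)) (fderiv ℝ g) Ω := fun _ hx =>
  (eqOn_indicator.eventuallyEq_of_mem (hΩ.mem_nhds hx)).fderiv_eq

variable [FiniteDimensional ℝ E] [MeasurableSpace E] [BorelSpace E] {μ : Measure E}
  [μ.IsAddHaarMeasure]

theorem integral_fderiv_apply_eq_zero (hg : ContDiff ℝ 1 g) (hgc : HasCompactSupport g) (v : E) :
    ∫ x, fderiv ℝ g x v ∂μ = 0 := by
  have hg'i : Integrable (fun x => fderiv ℝ g x v) μ :=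
    ((hg.continuous_fderiv (by simp)).clm_apply continuous_const).integrable_of_hasCompactSupport
      (hgc.fderiv_apply (𝕜 := ℝ) v)
  simpa using integral_smul_fderiv_eq_neg_fderiv_smul_of_integrable (μ := μ)
    (f := fun _ : E => (1 : ℝ)) (g := g) (v := v) (by simp) (by simpa using hg'i)
    (by simpa using hg.continuous.integrable_of_hasCompactSupport hgc) (by simp)
    (fun x _ => hg.differentiable (by simp) x)

theorem setIntegral_fderiv_apply_eq_zero (hΩ : IsOpen Ω) (hS : IsCompact S) (hSΩ : S ⊆ Ω)
    (hgn : ContDiffOn ℝ 1 g Ω) (hg : ∀ x ∈ Ω \ S, g x = 0) (v : E) :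
    ∫ x in Ω, fderiv ℝ g x v ∂μ = 0 := by
  have hsupp := tsupport_indicator_subset hS.isClosed hg
  have hsupp' : ∀ x ∉ Ω, fderiv ℝ (Ω.indicator g) x v = 0 := fun x hx => by
    rw [image_eq_zero_of_notMem_tsupport (f := fderiv ℝ (Ω.indicator g))
      fun h => hx (hSΩ (hsupp (tsupport_fderiv_subset ℝ h))), zero_apply]
  calc ∫ x in Ω, fderiv ℝ g x v ∂μ = ∫ x in Ω, fderiv ℝ (Ω.indicator g) x v ∂μ :=
        setIntegral_congr_fun hΩ.measurableSet fun x hx => by rw [fderiv_indicator_eqOn hΩ hx]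
    _ = ∫ x, fderiv ℝ (Ω.indicator g) x v ∂μ :=
        setIntegral_eq_integral_of_forall_compl_eq_zero hsupp'
    _ = 0 := integral_fderiv_apply_eq_zero (contDiff_indicator hΩ hS.isClosed hSΩ hgn hg)
        (hS.of_isClosed_subset (isClosed_tsupport _) hsupp) v

end CompactlySupported

section FunctionsOfPotential

theorem comp_eq_zero_of_mem_diff_sublevel {X M : Type*} [Zero M] {Ω : Set X} {ψ : X → ℝ} {f : ℝ → M}
    {c : ℝ} (hfc : ∀ τ, c < τ → f τ = 0) :
    ∀ x ∈ Ω \ {x ∈ Ω | ψ x ≤ c}, f (ψ x) = 0 := fun _ hx =>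
  hfc _ (not_le.1 fun hle => hx.2 ⟨hx.1, hle⟩)

theorem deriv_eq_zero_of_lt {f : ℝ → ℝ} {c : ℝ} (hfc : ∀ τ, c < τ → f τ = 0) :
    ∀ τ, c < τ → deriv f τ = 0 := fun τ hτ => by
  have h : f =ᶠ[𝓝 τ] fun _ => 0 := (eventually_gt_nhds hτ).mono fun s hs => hfc s hs
  rw [h.deriv_eq, deriv_const]

theorem integrableOn_comp_mul {X : Type*} [TopologicalSpace X] [T2Space X] [MeasurableSpace X]
    [BorelSpace X] {μ : Measure X} [IsFiniteMeasureOnCompacts μ] {Ω : Set X} {ψ g : X → ℝ}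
    {f : ℝ → ℝ} {c : ℝ} (hΩ : IsOpen Ω) (hS : IsCompact {x ∈ Ω | ψ x ≤ c})
    (hψ : ContinuousOn ψ Ω) (hf : Continuous f) (hfc : ∀ τ, c < τ → f τ = 0)
    (hg : ContinuousOn g Ω) : IntegrableOn (fun x => f (ψ x) * g x) Ω μ := by
  have hcont : ContinuousOn (fun x => f (ψ x) * g x) {x ∈ Ω | ψ x ≤ c} :=
    ((hf.comp_continuousOn hψ).mul hg).mono (sep_subset _ _)
  refine (hcont.integrableOn_compact hS).of_forall_sdiff_eq_zero hΩ.measurableSet fun x hx => ?_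
  rw [comp_eq_zero_of_mem_diff_sublevel hfc x hx, zero_mul]

variable {E : Type*} [NormedAddCommGroup E] [NormedSpace ℝ E] {Ω : Set E} {ψ : E → ℝ} {f : ℝ → ℝ}
  {c : ℝ}

theorem fderiv_comp_mul_fderiv_apply {x : E} (hf : DifferentiableAt ℝ f (ψ x))
    (hψ : ContDiffAt ℝ 2 ψ x) (v : E) :
    fderiv ℝ (fun x => f (ψ x) * fderiv ℝ ψ x v) x v
      = f (ψ x) * fderiv ℝ (fderiv ℝ ψ) x v v + deriv f (ψ x) * fderiv ℝ ψ x v ^ 2 := by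
  have hfψ : HasFDerivAt (fun x => f (ψ x)) (deriv f (ψ x) • fderiv ℝ ψ x) x :=
    hf.hasDerivAt.comp_hasFDerivAt x (hψ.differentiableAt (by simp)).hasFDerivAt
  have hψ' := ((hψ.fderiv_right (m := 1) (by norm_num)).differentiableAt
    (by simp)).hasFDerivAt.clm_apply (hasFDerivAt_const v x)
  rw [(hfψ.fun_mul hψ').fderiv]
  simp only [add_apply, smul_apply, ContinuousLinearMap.comp_apply, zero_apply, map_zero,
    ContinuousLinearMap.flip_apply, zero_add, smul_eq_mul]
  ring

theorem setIntegral_comp_mul_fderiv_fderiv [FiniteDimensional ℝ E] [MeasurableSpace E]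
    [BorelSpace E] {μ : Measure E} [μ.IsAddHaarMeasure] (hΩ : IsOpen Ω)
    (hS : IsCompact {x ∈ Ω | ψ x ≤ c}) (hψ : ContDiffOn ℝ 2 ψ Ω) (hf : ContDiff ℝ 1 f)
    (hfc : ∀ τ, c < τ → f τ = 0) (v : E) :
    ∫ x in Ω, f (ψ x) * fderiv ℝ (fderiv ℝ ψ) x v v ∂μ
      = -∫ x in Ω, deriv f (ψ x) * fderiv ℝ ψ x v ^ 2 ∂μ := by
  have hψ₁ : ContDiffOn ℝ 1 (fderiv ℝ ψ) Ω := hψ.fderiv_of_isOpen hΩ (by norm_num)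
  have hψ₂ : ContinuousOn (fderiv ℝ (fderiv ℝ ψ)) Ω := hψ₁.continuousOn_fderiv_of_isOpen hΩ le_rfl
  have hint : IntegrableOn (fun x => f (ψ x) * fderiv ℝ (fderiv ℝ ψ) x v v) Ω μ :=
    integrableOn_comp_mul hΩ hS hψ.continuousOn hf.continuous hfc
      ((hψ₂.clm_apply continuousOn_const).clm_apply continuousOn_const)
  have hint' : IntegrableOn (fun x => deriv f (ψ x) * fderiv ℝ ψ x v ^ 2) Ω μ :=
    integrableOn_comp_mul hΩ hS hψ.continuousOn (hf.continuous_deriv le_rfl)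
      (deriv_eq_zero_of_lt hfc) ((hψ₁.continuousOn.clm_apply continuousOn_const).pow 2)
  rw [eq_neg_iff_add_eq_zero, ← integral_add hint hint',
    ← setIntegral_fderiv_apply_eq_zero (μ := μ) hΩ hS (sep_subset _ _)
      (g := fun x => f (ψ x) * fderiv ℝ ψ x v)
      ((hf.comp_contDiffOn (hψ.of_le (by norm_num))).mul (hψ₁.clm_apply contDiffOn_const))
      (fun x hx => by rw [comp_eq_zero_of_mem_diff_sublevel hfc x hx, zero_mul]) v]
  exact setIntegral_congr_fun hΩ.measurableSet fun x hx => (fderiv_comp_mul_fderiv_apply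
    (hf.differentiable (by simp) _) (hψ.contDiffAt (hΩ.mem_nhds hx)) v).symm

end FunctionsOfPotential

section PlanarPotential

variable {Ω : Set E2} {ψ : E2 → ℝ} {f : ℝ → ℝ} {c : ℝ}

/-- The squared Euclidean length `|∇ψ|²` of the gradient, which is also `|A|²` for the canonical
potential `A = (-∂₂ψ, ∂₁ψ)`; the Pauli energy density of a function of `ψ` is a multiple of it. -/
def gradSq (ψ : E2 → ℝ) (x : E2) : ℝ := pdR 0 ψ x ^ 2 + pdR 1 ψ x ^ 2

theorem pdR_pdR_eq {x : E2} (hψ : ContDiffAt ℝ 2 ψ x) (i j : Fin 2) :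
    pdR i (pdR j ψ) x
      = fderiv ℝ (fderiv ℝ ψ) x (EuclideanSpace.single i 1) (EuclideanSpace.single j 1) := by
  have hψ' := ((hψ.fderiv_right (m := 1) (by norm_num)).differentiableAt (by simp)).hasFDerivAt
  rw [pdR, show pdR j ψ = fun y => fderiv ℝ ψ y (EuclideanSpace.single j 1) from rfl,
    (hψ'.clm_apply (hasFDerivAt_const _ x)).fderiv]
  simp

theorem exists_fderiv_fderiv_eq_zero_of_det_hess_eq_zero {x : E2} (hψ : ContDiffAt ℝ 2 ψ x)
    (hdet : (hess ψ x).det = 0) : ∃ v ≠ 0, fderiv ℝ (fderiv ℝ ψ) x v = 0 := by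
  obtain ⟨v, hv, hvH⟩ := Matrix.exists_vecMul_eq_zero_iff.2 hdet
  have hcoord : WithLp.toLp 2 v
      = v 0 • EuclideanSpace.single 0 1 + v 1 • EuclideanSpace.single 1 1 := by
    ext i
    fin_cases i <;> simp
  refine ⟨WithLp.toLp 2 v, by simpa using hv, ContinuousLinearMap.coe_injective
    ((EuclideanSpace.basisFun (Fin 2) ℝ).toBasis.ext fun j => ?_)⟩
  simpa [hcoord, Matrix.vecMul, dotProduct, Fin.sum_univ_two, hess, pdR_pdR_eq hψ] using
    congrFun hvH j

theorem continuousOn_pdR (hΩ : IsOpen Ω) (hψ : ContDiffOn ℝ 1 ψ Ω) (i : Fin 2) :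
    ContinuousOn (pdR i ψ) Ω :=
  (hψ.continuousOn_fderiv_of_isOpen hΩ le_rfl).clm_apply continuousOn_const

theorem continuousOn_gradSq (hΩ : IsOpen Ω) (hψ : ContDiffOn ℝ 1 ψ Ω) :
    ContinuousOn (gradSq ψ) Ω :=
  ((continuousOn_pdR hΩ hψ 0).pow 2).add ((continuousOn_pdR hΩ hψ 1).pow 2)

theorem setIntegral_comp_mul_lapl (hΩ : IsOpen Ω) (hS : IsCompact {x ∈ Ω | ψ x ≤ c})
    (hψ : ContDiffOn ℝ 2 ψ Ω) (hf : ContDiff ℝ 1 f) (hfc : ∀ τ, c < τ → f τ = 0) :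
    ∫ x in Ω, f (ψ x) * lapl ψ x = -∫ x in Ω, deriv f (ψ x) * gradSq ψ x := by
  have hψ₂ : ContinuousOn (fderiv ℝ (fderiv ℝ ψ)) Ω :=
    (hψ.fderiv_of_isOpen hΩ (m := 1) (by norm_num)).continuousOn_fderiv_of_isOpen hΩ le_rfl
  have hψ' := continuousOn_pdR hΩ (hψ.of_le (by norm_num))
  have hint : ∀ i : Fin 2, IntegrableOn (fun x => f (ψ x) * fderiv ℝ (fderiv ℝ ψ) x
      (EuclideanSpace.single i 1) (EuclideanSpace.single i 1)) Ω := fun i =>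
    integrableOn_comp_mul hΩ hS hψ.continuousOn hf.continuous hfc
      ((hψ₂.clm_apply continuousOn_const).clm_apply continuousOn_const)
  have hint' : ∀ i : Fin 2, IntegrableOn (fun x => deriv f (ψ x) * pdR i ψ x ^ 2) Ω := fun i =>
    integrableOn_comp_mul hΩ hS hψ.continuousOn (hf.continuous_deriv le_rfl)
      (deriv_eq_zero_of_lt hfc) ((hψ' i).pow 2)
  have hparts := fun i : Fin 2 => setIntegral_comp_mul_fderiv_fderiv (μ := volume) hΩ hS hψ hf hfc
    (EuclideanSpace.single i 1)
  calc ∫ x in Ω, f (ψ x) * lapl ψ x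
      = ∫ x in Ω, (f (ψ x) * fderiv ℝ (fderiv ℝ ψ) x (EuclideanSpace.single 0 1)
          (EuclideanSpace.single 0 1) + f (ψ x) * fderiv ℝ (fderiv ℝ ψ) x
          (EuclideanSpace.single 1 1) (EuclideanSpace.single 1 1)) :=
        setIntegral_congr_fun hΩ.measurableSet fun x hx => by
          have hψx := hψ.contDiffAt (hΩ.mem_nhds hx)
          simp only [lapl, pdR_pdR_eq hψx, mul_add]
    _ = -∫ x in Ω, (deriv f (ψ x) * pdR 0 ψ x ^ 2 + deriv f (ψ x) * pdR 1 ψ x ^ 2) := by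
        rw [integral_add (hint 0) (hint 1), integral_add (hint' 0) (hint' 1), hparts 0, hparts 1,
          neg_add]
        rfl
    _ = -∫ x in Ω, deriv f (ψ x) * gradSq ψ x := by simp only [gradSq, mul_add]

/-- Integrate by parts against the primitive of `w` that vanishes above `c`. -/
theorem setIntegral_comp_mul_gradSq_le {w : ℝ → ℝ} (hΩ : IsOpen Ω)
    (hS : IsCompact {x ∈ Ω | ψ x ≤ c}) (hψ : ContDiffOn ℝ 2 ψ Ω)
    (hΔ : IntegrableOn (lapl ψ) Ω) (hw : Continuous w) (hwi : Integrable w) (hw₀ : 0 ≤ w)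
    (hwc : ∀ τ, c < τ → w τ = 0) :
    ∫ x in Ω, w (ψ x) * gradSq ψ x ≤ (∫ τ, w τ) * ∫ x in Ω, |lapl ψ x| := by
  set F : ℝ → ℝ := fun s => ∫ t in s..c, w t
  have hFw : ∀ s, HasDerivAt F (-w s) s := fun s =>
    intervalIntegral.integral_hasDerivAt_left (hw.intervalIntegrable s c)
      (hw.stronglyMeasurableAtFilter _ _) hw.continuousAt
  have hF' : deriv F = -w := funext fun s => (hFw s).deriv
  have hFc : ∀ s, c < s → F s = 0 := fun s hs =>
    intervalIntegral.integral_zero_ae <| .of_forall fun t ht => hwc t (by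
      rw [uIoc_of_ge hs.le] at ht
      exact ht.1)
  have hFle : ∀ s, ‖F s‖ ≤ ∫ τ, w τ := fun s => by
    refine intervalIntegral.norm_integral_le_integral_norm_uIoc.trans ?_
    simp only [Real.norm_of_nonneg (hw₀ _)]
    exact setIntegral_le_integral hwi (.of_forall hw₀)
  have hF : ContDiff ℝ 1 F :=
    contDiff_one_iff_deriv.2 ⟨fun s => (hFw s).differentiableAt, hF' ▸ hw.neg⟩
  calc ∫ x in Ω, w (ψ x) * gradSq ψ x = ∫ x in Ω, F (ψ x) * lapl ψ x := by
        simp only [setIntegral_comp_mul_lapl hΩ hS hψ hF hFc, hF', Pi.neg_apply, neg_mul,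
          integral_neg, neg_neg]
    _ ≤ ∫ x in Ω, (∫ τ, w τ) * |lapl ψ x| := by
        refine (Real.le_norm_self _).trans
          (norm_integral_le_of_norm_le (hΔ.abs.const_mul _) (.of_forall fun x => ?_))
        rw [norm_mul, Real.norm_eq_abs (lapl ψ x)]
        gcongr
        exact hFle _
    _ = (∫ τ, w τ) * ∫ x in Ω, |lapl ψ x| := integral_const_mul _ _

theorem setIntegral_comp_sq_mul_lapl (hΩ : IsOpen Ω) (hS : IsCompact {x ∈ Ω | ψ x ≤ c})
    (hψ : ContDiffOn ℝ 2 ψ Ω) (hf : ContDiff ℝ 1 f) (hfc : ∀ τ, c < τ → f τ = 0) :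
    ∫ x in Ω, f (ψ x) ^ 2 * lapl ψ x
      = -∫ x in Ω, 2 * f (ψ x) * deriv f (ψ x) * gradSq ψ x := by
  have hsq : deriv (fun τ => f τ ^ 2) = fun τ => 2 * f τ * deriv f τ := funext fun τ => by
    simpa using ((hf.differentiable (by simp) τ).hasDerivAt.fun_pow 2).deriv
  simpa only [hsq] using
    setIntegral_comp_mul_lapl hΩ hS hψ (hf.pow 2) (fun τ hτ => by simp [hfc τ hτ])

theorem norm_pauli_density (a b p q : ℝ) (h : ℝ) :
    ‖(h : ℂ) * (a * p : ℝ) - Complex.I * (-q : ℝ) * (b : ℂ)‖ ^ 2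
      + ‖(h : ℂ) * (a * q : ℝ) - Complex.I * p * (b : ℂ)‖ ^ 2
      = ((h * a) ^ 2 + b ^ 2) * (p ^ 2 + q ^ 2) := by
  simp only [Complex.sq_norm, Complex.normSq_apply, Complex.ofReal_mul, Complex.ofReal_neg,
    mul_neg, neg_mul, sub_neg_eq_add, Complex.add_re, Complex.mul_re, Complex.ofReal_re,
    Complex.ofReal_im, mul_zero, sub_zero, Complex.mul_im, zero_mul, add_zero, Complex.I_re,
    Complex.I_im, sub_self, one_mul, zero_add, Complex.add_im, Complex.sub_re, Complex.sub_im,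
    zero_sub, neg_neg]
  ring

theorem pdC_indicator_comp {x : E2} (hΩ : IsOpen Ω) (hx : x ∈ Ω)
    (hf : DifferentiableAt ℝ f (ψ x)) (hψ : DifferentiableAt ℝ ψ x) (i : Fin 2) :
    pdC i (Ω.indicator fun x => (f (ψ x) : ℂ)) x = (deriv f (ψ x) * pdR i ψ x : ℝ) := by
  have hfψ : HasFDerivAt (fun x => (f (ψ x) : ℂ)) _ x :=
    Complex.ofRealCLM.hasFDerivAt.comp x (hf.hasDerivAt.comp_hasFDerivAt x hψ.hasFDerivAt)
  rw [pdC, fderiv_indicator_eqOn hΩ hx, hfψ.fderiv]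
  simp [pdR]

theorem pauliQ_indicator_comp {B : E2 → ℝ} (h : ℝ) (hΩ : IsOpen Ω)
    (hS : IsCompact {x ∈ Ω | ψ x ≤ c}) (hψ : ContDiffOn ℝ 2 ψ Ω) (hΔ : EqOn (lapl ψ) B Ω)
    (hf : ContDiff ℝ 1 f) (hfc : ∀ τ, c < τ → f τ = 0) :
    pauliQ Ω (fun x => -pdR 1 ψ x) (fun x => pdR 0 ψ x) B h (Ω.indicator fun x => (f (ψ x) : ℂ))
      = ∫ x in Ω, (h * deriv f (ψ x) + f (ψ x)) ^ 2 * gradSq ψ x := by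
  have : Continuous (deriv f) := hf.continuous_deriv le_rfl
  have hf'c := deriv_eq_zero_of_lt hfc
  have hgrad : ContinuousOn (gradSq ψ) Ω := continuousOn_gradSq hΩ (hψ.of_le (by norm_num))
  have hkinetic : IntegrableOn (fun x => ((h * deriv f (ψ x)) ^ 2 + f (ψ x) ^ 2) * gradSq ψ x) Ω :=
    integrableOn_comp_mul hΩ hS hψ.continuousOn (f := fun τ => (h * deriv f τ) ^ 2 + f τ ^ 2)
      (by fun_prop) (fun τ hτ => by simp [hf'c τ hτ, hfc τ hτ]) hgrad
  have hcross : IntegrableOn (fun x => 2 * f (ψ x) * deriv f (ψ x) * gradSq ψ x) Ω :=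
    integrableOn_comp_mul hΩ hS hψ.continuousOn (f := fun τ => 2 * f τ * deriv f τ)
      (by fun_prop) (fun τ hτ => by simp [hfc τ hτ]) hgrad
  have hmagnetic : ∫ x in Ω, B x * ‖Ω.indicator (fun x => (f (ψ x) : ℂ)) x‖ ^ 2
      = -∫ x in Ω, 2 * f (ψ x) * deriv f (ψ x) * gradSq ψ x := by
    rw [← setIntegral_comp_sq_mul_lapl hΩ hS hψ hf hfc]
    refine setIntegral_congr_fun hΩ.measurableSet fun x hx => ?_
    simp [indicator_of_mem hx, hΔ hx, mul_comm]
  have hdensity : EqOn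
      (fun x => ‖(h : ℂ) * pdC 0 (Ω.indicator fun x => (f (ψ x) : ℂ)) x
          - Complex.I * (-pdR 1 ψ x : ℝ) * Ω.indicator (fun x => (f (ψ x) : ℂ)) x‖ ^ 2
        + ‖(h : ℂ) * pdC 1 (Ω.indicator fun x => (f (ψ x) : ℂ)) x
          - Complex.I * (pdR 0 ψ x : ℝ) * Ω.indicator (fun x => (f (ψ x) : ℂ)) x‖ ^ 2)
      (fun x => ((h * deriv f (ψ x)) ^ 2 + f (ψ x) ^ 2) * gradSq ψ x) Ω := fun x hx => by
    have hpd := pdC_indicator_comp hΩ hx (hf.differentiable (by simp) _)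
      ((hψ.contDiffAt (hΩ.mem_nhds hx)).differentiableAt (by simp))
    simp only [hpd, indicator_of_mem hx, norm_pauli_density, gradSq]
  rw [pauliQ, hmagnetic, mul_neg, sub_neg_eq_add, ← integral_const_mul,
    setIntegral_congr_fun hΩ.measurableSet hdensity, ← integral_add hkinetic (hcross.const_mul h)]
  congr 1 with x
  ring

end PlanarPotential

section TrialFunction

/-- The trial function is `profile (ψ / h)`. The factor `e⁻ᵗ` makes `e^(-ψ / h)`, the zero mode
of the Pauli operator, out of it; the cut-off lives where `-2 ≤ t ≤ -1`, so that `profile (ψ / h)`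
is compactly supported when `ψ` vanishes on the boundary. -/
def profile (t : ℝ) : ℝ := Real.smoothTransition (-1 - t) * Real.exp (-t)

/-- The squared deviation of `profile` from the solutions `e⁻ᵗ` of `y' + y = 0`. -/
def profileDefect (t : ℝ) : ℝ := (deriv profile t + profile t) ^ 2

theorem contDiff_profile {n : ℕ∞} : ContDiff ℝ n profile :=
  (Real.smoothTransition.contDiff.comp (by fun_prop)).mul (by fun_prop)

theorem profile_of_le {t : ℝ} (ht : t ≤ -2) : profile t = Real.exp (-t) := by
  rw [profile, Real.smoothTransition.one_of_one_le (by linarith), one_mul]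

theorem profile_of_lt : ∀ t, -1 < t → profile t = 0 := fun t ht => by
  rw [profile, Real.smoothTransition.zero_of_nonpos (by linarith), zero_mul]

theorem profileDefect_nonneg : 0 ≤ profileDefect := fun _ => sq_nonneg _

theorem continuous_profileDefect : Continuous profileDefect :=
  ((contDiff_profile.continuous_deriv (n := 1) le_rfl).add
    (contDiff_profile (n := 0)).continuous).pow 2

theorem profileDefect_of_lt : ∀ t, -1 < t → profileDefect t = 0 := fun t ht => by
  rw [profileDefect, deriv_eq_zero_of_lt profile_of_lt t ht, profile_of_lt t ht]
  norm_num

theorem profileDefect_of_lt_neg_two {t : ℝ} (ht : t < -2) : profileDefect t = 0 := by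
  have hexp : profile =ᶠ[𝓝 t] fun s => Real.exp (-s) :=
    (eventually_lt_nhds ht).mono fun s hs => profile_of_le hs.le
  have hderiv : HasDerivAt (fun s => Real.exp (-s)) (-Real.exp (-t)) t := by
    simpa using (hasDerivAt_neg t).exp
  rw [profileDefect, hexp.deriv_eq, hderiv.deriv, hexp.eq_of_nhds, neg_add_cancel, sq, zero_mul]

theorem integrable_profileDefect : Integrable profileDefect :=
  continuous_profileDefect.integrable_of_hasCompactSupport <|
    .intro (isCompact_Icc (a := -2) (b := -1)) fun t ht => by
      rcases not_and_or.1 ht with ht | ht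
      · exact profileDefect_of_lt_neg_two (not_le.1 ht)
      · exact profileDefect_of_lt t (not_le.1 ht)

/-- The quasimode `profile (ψ / h)`, extended by zero outside `Ω`. -/
def trialFun (Ω : Set E2) (ψ : E2 → ℝ) (h : ℝ) : E2 → ℂ :=
  Ω.indicator fun x => (profile (ψ x / h) : ℂ)

variable {Ω : Set E2} {B ψ : E2 → ℝ} {h : ℝ}

theorem neg_one_lt_div {h τ : ℝ} (hh : 0 < h) (hτ : -h < τ) : -1 < τ / h := by
  rwa [lt_div_iff₀ hh, neg_one_mul]

theorem isCptSmoothIn_trialFun (hΩ : IsOpen Ω) (hψ : ContDiffOn ℝ (⊤ : ℕ∞) ψ Ω) (hh : 0 < h)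
    (hS : IsCompact {x ∈ Ω | ψ x ≤ -h}) : IsCptSmoothIn Ω (trialFun Ω ψ h) := by
  have hzero : ∀ x ∈ Ω \ {x ∈ Ω | ψ x ≤ -h}, (profile (ψ x / h) : ℂ) = 0 :=
    comp_eq_zero_of_mem_diff_sublevel (f := fun τ => (profile (τ / h) : ℂ)) fun τ hτ => by
      rw [profile_of_lt _ (neg_one_lt_div hh hτ), Complex.ofReal_zero]
  have hsupp := tsupport_indicator_subset hS.isClosed hzero
  refine ⟨contDiff_indicator hΩ hS.isClosed (sep_subset _ _) ?_ hzero,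
    hS.of_isClosed_subset (isClosed_tsupport _) hsupp, hsupp.trans (sep_subset _ _)⟩
  exact Complex.ofRealCLM.contDiff.comp_contDiffOn
    (contDiff_profile.comp_contDiffOn (hψ.div_const h))

theorem pauliQ_trialFun_le (hΩ : IsOpen Ω) (hψ : ContDiffOn ℝ 2 ψ Ω) (hΔ : EqOn (lapl ψ) B Ω)
    (hB : IntegrableOn B Ω) (hh : 0 < h) (hS : IsCompact {x ∈ Ω | ψ x ≤ -h}) :
    pauliQ Ω (fun x => -pdR 1 ψ x) (fun x => pdR 0 ψ x) B h (trialFun Ω ψ h)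
      ≤ h * (∫ t, profileDefect t) * ∫ x in Ω, |B x| := by
  have hderiv : ∀ τ, h * deriv (fun τ => profile (τ / h)) τ = deriv profile (τ / h) := fun τ => by
    have hprofile := ((contDiff_profile (n := 1)).differentiable (by simp) (τ / h)).hasDerivAt
    have hscaled : HasDerivAt (fun τ => profile (τ / h)) (deriv profile (τ / h) * (1 / h)) τ :=
      HasDerivAt.comp (h := fun τ => τ / h) τ hprofile ((hasDerivAt_id' τ).div_const h)
    rw [hscaled.deriv]
    field_simp
  calc pauliQ Ω (fun x => -pdR 1 ψ x) (fun x => pdR 0 ψ x) B h (trialFun Ω ψ h)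
      = ∫ x in Ω, profileDefect (ψ x / h) * gradSq ψ x := by
        rw [trialFun, pauliQ_indicator_comp h hΩ hS hψ hΔ (f := fun τ => profile (τ / h))
          ((contDiff_profile (n := 1)).comp (by fun_prop))
          fun τ hτ => profile_of_lt _ (neg_one_lt_div hh hτ)]
        simp only [hderiv, profileDefect]
    _ ≤ (∫ τ, profileDefect (τ / h)) * ∫ x in Ω, |lapl ψ x| :=
        setIntegral_comp_mul_gradSq_le hΩ hS hψ
          (hB.congr_fun hΔ.symm hΩ.measurableSet)
          (continuous_profileDefect.comp (by fun_prop)) (integrable_profileDefect.comp_div hh.ne')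
          (fun τ => profileDefect_nonneg (τ / h))
          fun τ hτ => profileDefect_of_lt _ (neg_one_lt_div hh hτ)
    _ = h * (∫ t, profileDefect t) * ∫ x in Ω, |B x| := by
        rw [Measure.integral_comp_div, abs_of_pos hh, smul_eq_mul,
          setIntegral_congr_fun hΩ.measurableSet fun x hx => congrArg abs (hΔ hx)]

theorem le_integral_norm_sq_trialFun {c : ℝ} (hΩ : IsOpen Ω) (hψ : ContDiffOn ℝ (⊤ : ℕ∞) ψ Ω)
    (hcpt : ∀ c < 0, IsCompact {x ∈ Ω | ψ x ≤ c}) (hh : 0 < h) (hc : c ≤ -2 * h) :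
    Real.exp (-2 * c / h) * volume.real {x ∈ Ω | ψ x ≤ c} ≤ ∫ x in Ω, ‖trialFun Ω ψ h x‖ ^ 2 := by
  obtain ⟨hsmooth, hsupp, -⟩ := isCptSmoothIn_trialFun hΩ hψ hh (hcpt _ (neg_neg_of_pos hh))
  have hSc := hcpt c (by linarith)
  have hint : Integrable fun x => ‖trialFun Ω ψ h x‖ ^ 2 :=
    (hsmooth.continuous.norm.pow 2).integrable_of_hasCompactSupport (by
      simpa [sq] using hsupp.norm.mul_right)
  have hlow : ∀ x ∈ {x ∈ Ω | ψ x ≤ c}, Real.exp (-2 * c / h) ≤ ‖trialFun Ω ψ h x‖ ^ 2 := by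
    rintro x ⟨hx, hxc⟩
    have hxh : ψ x / h ≤ -2 := by rw [div_le_iff₀ hh]; exact hxc.trans hc
    rw [trialFun, indicator_of_mem hx, profile_of_le hxh, Complex.norm_real, Real.norm_eq_abs,
      Real.abs_exp, ← Real.exp_nat_mul, Real.exp_le_exp, ← sub_nonneg]
    have : (2 : ℕ) * -(ψ x / h) - -2 * c / h = 2 * (c - ψ x) / h := by push_cast; ring
    rw [this]
    exact div_nonneg (by linarith) hh.le
  exact (setIntegral_ge_of_const_le_real hSc.measurableSet hSc.measure_lt_top.ne hlow
    hint.integrableOn).trans (setIntegral_mono_set hint.integrableOn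
      (.of_forall fun _ => sq_nonneg _) (sep_subset _ _).eventuallyLE)

/-- If the Rayleigh quotients are unbounded below, `lambdaP` takes the junk value `0`. -/
theorem lambdaP_le_div {A₁ A₂ : E2 → ℝ} {a b : ℝ} {u : E2 → ℂ}
    (hu : IsCptSmoothIn Ω u) (ha : 0 ≤ a) (hb : 0 < b) (hQ : pauliQ Ω A₁ A₂ B h u ≤ a)
    (hub : b ≤ ∫ x in Ω, ‖u x‖ ^ 2) : lambdaP Ω A₁ A₂ B h ≤ a / b := by
  have hu₀ : u ≠ 0 := by
    rintro rfl
    exact hb.not_ge (by simpa using hub)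
  by_cases hbdd : BddBelow { r | ∃ u : E2 → ℂ, IsCptSmoothIn Ω u ∧ u ≠ 0 ∧
    r = pauliQ Ω A₁ A₂ B h u / ∫ x in Ω, ‖u x‖ ^ 2 }
  · exact csInf_le_of_le hbdd ⟨u, hu, hu₀, rfl⟩ (div_le_div₀ ha hQ hb hub)
  · rw [lambdaP, Real.sInf_of_not_bddBelow hbdd]
    positivity

theorem lambdaP_le_of_sublevel {c : ℝ} (hΩ : IsOpen Ω) (hψ : ContDiffOn ℝ (⊤ : ℕ∞) ψ Ω)
    (hcpt : ∀ c < 0, IsCompact {x ∈ Ω | ψ x ≤ c}) (hΔ : EqOn (lapl ψ) B Ω)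
    (hB : IntegrableOn B Ω) (hh : 0 < h) (hc : c ≤ -2 * h)
    (hvol : 0 < volume.real {x ∈ Ω | ψ x ≤ c}) :
    lambdaP Ω (fun x => -pdR 1 ψ x) (fun x => pdR 0 ψ x) B h
      ≤ h * ((∫ t, profileDefect t) * ∫ x in Ω, |B x|)
        / (Real.exp (-2 * c / h) * volume.real {x ∈ Ω | ψ x ≤ c}) := by
  have hS := hcpt _ (neg_neg_of_pos hh)
  have hdefect := integral_nonneg (μ := volume) profileDefect_nonneg
  refine lambdaP_le_div (isCptSmoothIn_trialFun hΩ hψ hh hS) (by positivity) (by positivity) ?_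
    (le_integral_norm_sq_trialFun hΩ hψ hcpt hh hc)
  rw [← mul_assoc]
  exact pauliQ_trialFun_le hΩ (hψ.of_le (WithTop.coe_le_coe.2 le_top)) hΔ hB hh hS

end TrialFunction

section MaximumPrinciple

theorem lapl_nonpos_of_isLocalMax {ψ : E2 → ℝ} {x : E2} (hψ : ContDiffAt ℝ 2 ψ x)
    (hmax : IsLocalMax ψ x) : lapl ψ x ≤ 0 := by
  rw [lapl, pdR_pdR_eq hψ, pdR_pdR_eq hψ]
  exact add_nonpos (fderiv_fderiv_apply_nonpos_of_isLocalMax hψ hmax _)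
    (fderiv_fderiv_apply_nonpos_of_isLocalMax hψ hmax _)

theorem neg_of_lapl_pos {Ω : Set E2} {ψ : E2 → ℝ} (hΩ : IsOpen Ω) (hcl : IsCompact (closure Ω))
    (hψc : ContinuousOn ψ (closure Ω)) (hψ : ContDiffOn ℝ 2 ψ Ω)
    (hbd : ∀ x ∈ frontier Ω, ψ x ≤ 0) (hlapl : ∀ x ∈ Ω, 0 < lapl ψ x) {x : E2} (hx : x ∈ Ω) :
    ψ x < 0 := by
  have hint : ∀ y ∈ Ω, ¬IsMaxOn ψ (closure Ω) y := fun y hy hmax =>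
    (hlapl y hy).not_ge (lapl_nonpos_of_isLocalMax (hψ.contDiffAt (hΩ.mem_nhds hy))
      (hmax.isLocalMax (mem_of_superset (hΩ.mem_nhds hy) subset_closure)))
  obtain ⟨y, hycl, hmax⟩ := hcl.exists_isMaxOn ⟨x, subset_closure hx⟩ hψc
  have hy : ψ y ≤ 0 := hbd y (hΩ.frontier_eq ▸ ⟨hycl, fun hy => hint y hy hmax⟩)
  refine ((hmax (subset_closure hx)).trans hy).lt_of_ne fun hx₀ => hint x hx fun z hz => ?_
  exact ((hmax hz).trans hy).trans_eq hx₀.symm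

end MaximumPrinciple

section BoundedDomain

variable {X : Type*} [TopologicalSpace X] {Ω : Set X} {f : X → ℝ}

theorem isCompact_sublevel_of_lt_frontier {c : ℝ} (hΩ : IsOpen Ω) (hcl : IsCompact (closure Ω))
    (hf : ContinuousOn f (closure Ω)) (hbd : ∀ x ∈ frontier Ω, c < f x) :
    IsCompact {x ∈ Ω | f x ≤ c} := by
  have heq : {x ∈ Ω | f x ≤ c} = {x ∈ closure Ω | f x ≤ c} := by
    refine Subset.antisymm (fun x hx => ⟨subset_closure hx.1, hx.2⟩) fun x hx => ⟨?_, hx.2⟩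
    by_contra hxΩ
    exact (hbd x (hΩ.frontier_eq ▸ ⟨hx.1, hxΩ⟩)).not_ge hx.2
  rw [heq]
  exact hcl.of_isClosed_subset (hf.preimage_isClosed_of_isClosed isClosed_closure isClosed_Iic)
    (sep_subset _ _)

theorem isLocalMin_of_eq_sInf_image {x : X} (hΩ : IsOpen Ω) (hf : BddBelow (f '' Ω))
    (hx : x ∈ Ω) (hmin : f x = sInf (f '' Ω)) : IsLocalMin f x :=
  mem_of_superset (hΩ.mem_nhds hx) fun _ hy =>
    hmin.trans_le (csInf_le hf (mem_image_of_mem f hy))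

end BoundedDomain

theorem stmt7_general (Ω : Set E2) (hΩo : IsOpen Ω) (B ψ : E2 → ℝ)
    (hψsm : ContDiffOn ℝ (⊤ : ℕ∞) ψ Ω) (hcpt : ∀ c < 0, IsCompact {x ∈ Ω | ψ x ≤ c})
    (hB : IntegrableOn B Ω) (hΔ : ∀ x ∈ Ω, lapl ψ x = B x)
    (x₀ : E2) (hx₀ : x₀ ∈ Ω) (hmin : IsLocalMin ψ x₀) (hneg : ψ x₀ < 0)
    (hdeg : (hess ψ x₀).det = 0) :
    ∃ C > 0, ∃ h₀ > 0, ∀ h : ℝ, 0 < h → h < h₀ →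
      lambdaP Ω (fun x => -pdR 1 ψ x) (fun x => pdR 0 ψ x) B h
        ≤ C * h ^ ((1:ℝ)/4) * Real.exp (2 * ψ x₀ / h) := by
  have hψ₀ := hψsm.contDiffAt (hΩo.mem_nhds hx₀)
  obtain ⟨v, hv, hvdeg⟩ := exists_fderiv_fderiv_eq_zero_of_det_hess_eq_zero
    (hψ₀.of_le (WithTop.coe_le_coe.2 le_top)) hdeg
  obtain ⟨K, hvol⟩ := exists_ofReal_rpow_le_volume_sublevel
    (hψ₀.of_le (WithTop.coe_le_coe.2 le_top)) hmin hv hvdeg (hΩo.mem_nhds hx₀)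
  have hdeep : ∀ᶠ h in 𝓝[>] (0 : ℝ), ψ x₀ + K * h + 2 * h < 0 :=
    (Continuous.tendsto' (by fun_prop) 0 (ψ x₀) (by simp)).mono_left nhdsWithin_le_nhds
      |>.eventually_lt_const hneg
  obtain ⟨h₀, hh₀, hsmall⟩ := mem_nhdsGT_iff_exists_Ioo_subset.1 (hvol.and hdeep)
  set M := (∫ t, profileDefect t) * ∫ x in Ω, |B x|
  have hM : 0 ≤ M := mul_nonneg (integral_nonneg profileDefect_nonneg)
    (integral_nonneg fun _ => abs_nonneg _)
  refine ⟨M * Real.exp (2 * K) + 1, by positivity, h₀, hh₀, fun h hh hhh₀ => ?_⟩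
  obtain ⟨hvolh, hdeeph⟩ := hsmall ⟨hh, hhh₀⟩
  set c := ψ x₀ + K * h with hc
  replace hvolh : h ^ (3 / 4 : ℝ) ≤ volume.real {x ∈ Ω | ψ x ≤ c} :=
    (ENNReal.ofReal_le_iff_le_toReal (hcpt c (by linarith)).measure_lt_top.ne).1 hvolh
  have hrpow : h = h ^ (1 / 4 : ℝ) * h ^ (3 / 4 : ℝ) := by
    rw [← Real.rpow_add hh]; norm_num
  have hexp : Real.exp (-2 * c / h) * (Real.exp (2 * K) * Real.exp (2 * ψ x₀ / h)) = 1 := by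
    rw [← Real.exp_add, ← Real.exp_add, Real.exp_eq_one_iff, hc]
    field_simp
    ring
  calc lambdaP Ω (fun x => -pdR 1 ψ x) (fun x => pdR 0 ψ x) B h
      ≤ h * M / (Real.exp (-2 * c / h) * volume.real {x ∈ Ω | ψ x ≤ c}) :=
        lambdaP_le_of_sublevel hΩo hψsm hcpt hΔ hB hh (by linarith)
          ((Real.rpow_pos_of_pos hh _).trans_le hvolh)
    _ ≤ h * M / (Real.exp (-2 * c / h) * h ^ (3 / 4 : ℝ)) := by gcongr
    _ = M * Real.exp (2 * K) * h ^ (1 / 4 : ℝ) * Real.exp (2 * ψ x₀ / h) := by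
        rw [div_eq_iff (by positivity)]
        linear_combination M * hrpow - M * h ^ (1 / 4 : ℝ) * h ^ (3 / 4 : ℝ) * hexp
    _ ≤ (M * Real.exp (2 * K) + 1) * h ^ (1 / 4 : ℝ) * Real.exp (2 * ψ x₀ / h) := by
        gcongr
        exact le_add_of_nonneg_right zero_le_one

/-- upper bound in the degenerate case. If `ψ` attains its minimum at a point
with degenerate Hessian, then `λ_{P₋}(h) ≤ C h^{1/4} exp(2ψ_min/h)` for small `h`. -/
theorem stmt7 (Ω : Set E2) (hΩo : IsOpen Ω) (hΩne : Ω.Nonempty)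
    (hΩb : Bornology.IsBounded Ω)
    (hsc : SimplyConnectedSpace Ω)
    (hsb : HasSmoothBoundary Ω)
    (U : Set E2) (hU : IsOpen U) (hclU : closure Ω ⊆ U)
    (B ψ : E2 → ℝ)
    (hBsm : ContDiffOn ℝ (⊤ : ℕ∞) B U) (hBpos : ∀ x ∈ closure Ω, 0 < B x)
    (hψsm : ContDiffOn ℝ (⊤ : ℕ∞) ψ U)
    (hΔ : ∀ x ∈ Ω, lapl ψ x = B x)
    (hbd : ∀ x ∈ frontier Ω, ψ x = 0)
    (x₀ : E2) (hx₀ : x₀ ∈ Ω) (hx₀min : ψ x₀ = sInf (ψ '' Ω))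
    (hdeg : (hess ψ x₀).det = 0) :
    ∃ C > 0, ∃ h₀ > 0, ∀ h : ℝ, 0 < h → h < h₀ →
      lambdaP Ω (fun x => -pdR 1 ψ x) (fun x => pdR 0 ψ x) B h
        ≤ C * h ^ ((1:ℝ)/4) * Real.exp (2 * sInf (ψ '' Ω) / h) := by
  have hcl : IsCompact (closure Ω) := hΩb.isCompact_closure
  have hψc : ContinuousOn ψ (closure Ω) := hψsm.continuousOn.mono hclU
  have hψΩ : ContDiffOn ℝ (⊤ : ℕ∞) ψ Ω := hψsm.mono (subset_closure.trans hclU)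
  have hB : IntegrableOn B Ω :=
    ((hBsm.continuousOn.mono hclU).integrableOn_compact hcl).mono_set subset_closure
  have hbdd : BddBelow (ψ '' Ω) := (hcl.bddBelow_image hψc).mono (image_mono subset_closure)
  have hlapl : ∀ x ∈ Ω, 0 < lapl ψ x := fun x hx => hΔ x hx ▸ hBpos x (subset_closure hx)
  have hneg : ψ x₀ < 0 := neg_of_lapl_pos hΩo hcl hψc (hψΩ.of_le (WithTop.coe_le_coe.2 le_top))
    (fun x hx => (hbd x hx).le) hlapl hx₀
  have hcpt : ∀ c < 0, IsCompact {x ∈ Ω | ψ x ≤ c} := fun c hc =>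
    isCompact_sublevel_of_lt_frontier hΩo hcl hψc fun x hx => hc.trans_eq (hbd x hx).symm
  have hmin : IsLocalMin ψ x₀ := isLocalMin_of_eq_sInf_image hΩo hbdd hx₀ hx₀min
  rw [← hx₀min]
  exact stmt7_general Ω hΩo B ψ hψΩ hcpt hB hΔ x₀ hx₀ hmin hneg hdeg
end
end
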